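/- arXiv:2512.17285 — 4 statements merged into one kernel-verified Lean document; each statement's English description precedes it below -/
import Mathlib

section
/- Let x : ℕ → ℝ be a sequence of positive terms with ∑ₙ x(n) < ∞. Then the achievement set E(x) is a compact subset of ℝ and is perfect (it has no isolated points). -/
/-!
The map sending a 0-1 sequence `b` to the subsum over `{n ≥ 1 | b n = true}` is continuous on
`ℕ → Bool`, being a uniform limit of continuous functions by the Weierstrass M-test with
majorant `|x n|`. Its range is the achievement set, which is therefore compact, as `ℕ → Bool` is.

For perfectness, take `y = ∑_{n ∈ A} x n`. Removing `n` from `A` (if `n ∈ A`) or adding it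
(if `n ∉ A`) gives another subsum at distance `x n > 0` from `y`, and `x n → 0`.
-/

open Set Filter Topology MeasureTheory
open scoped Pointwise

/-- The achievement set (set of subsums) of the series `∑_{n ≥ 1} x n`
(sequences are indexed by `n ≥ 1`; the value `x 0` is irrelevant). -/
def achievementSet (x : ℕ → ℝ) : Set ℝ :=
  {y : ℝ | ∃ A : Set ℕ, A ⊆ {n | 1 ≤ n} ∧ HasSum (fun n : A => x (n : ℕ)) y}

/-- The `n`-th remainder `r n = ∑_{i > n} x i` of a series. -/
noncomputable def remainder (x : ℕ → ℝ) (n : ℕ) : ℝ :=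
  ∑' i : {i : ℕ // n < i}, x (i : ℕ)

/-- The set of Kakeya conditions `K(x) = {n ≥ 1 : x n > r n}`. -/
def kakeyaSet (x : ℕ → ℝ) : Set ℕ :=
  {n : ℕ | 1 ≤ n ∧ remainder x n < x n}

/-- A Cantor set: a set homeomorphic to the Cantor ternary set. -/
def IsCantorSet (A : Set ℝ) : Prop :=
  Nonempty (A ≃ₜ cantorSet)

/-- A multi-interval set: the union of finitely many (at least one)
nondegenerate compact intervals. -/
def IsMultiInterval (A : Set ℝ) : Prop :=
  ∃ S : Finset (ℝ × ℝ), S.Nonempty ∧ (∀ p ∈ S, p.1 < p.2) ∧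
    A = ⋃ p ∈ S, Set.Icc p.1 p.2

/-- The gaps of a set `A ⊆ ℝ`: the bounded connected components of its complement. -/
def gaps (A : Set ℝ) : Set (Set ℝ) :=
  {G | (∃ x ∉ A, G = connectedComponentIn Aᶜ x) ∧ Bornology.IsBounded G}

/-- The nondegenerate connected components of a set `A ⊆ ℝ`. -/
def intervalComponents (A : Set ℝ) : Set (Set ℝ) :=
  {I | (∃ x ∈ A, I = connectedComponentIn A x) ∧ ¬ I.Subsingleton}

/-- A Cantorval: a nonempty compact subset of `ℝ` possessing at least one gap and at
least one nondegenerate component, such that both endpoints of every gap are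
accumulation points both of other gaps and of nondegenerate components. -/
def IsCantorval (A : Set ℝ) : Prop :=
  A.Nonempty ∧ IsCompact A ∧ (gaps A).Nonempty ∧ (intervalComponents A).Nonempty ∧
    ∀ G ∈ gaps A, ∀ p ∈ ({sInf G, sSup G} : Set ℝ),
      (∀ ε > (0 : ℝ), ∃ G' ∈ gaps A, G' ≠ G ∧ (G' ∩ Metric.ball p ε).Nonempty) ∧
      (∀ ε > (0 : ℝ), ∃ I ∈ intervalComponents A, (I ∩ (Metric.ball p ε \ {p})).Nonempty)

/-- Subsums are the values of a continuous function on the compact space `ℕ → Bool`. -/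
theorem isCompact_achievementSet {x : ℕ → ℝ} (hsum : Summable x) :
    IsCompact (achievementSet x) := by
  classical
  let F : (ℕ → Bool) → ℝ := fun b => ∑' n, {n | 1 ≤ n ∧ b n = true}.indicator x n
  have hF : Continuous F := by
    refine continuous_tsum (u := fun n => ‖x n‖) (fun n => ?_) hsum.norm
      (fun n b => norm_indicator_le_norm_self x n)
    -- The `n`-th summand factors through the discrete coordinate `b n`.
    have h : (fun b : ℕ → Bool => {n | 1 ≤ n ∧ b n = true}.indicator x n) =
        (fun t : Bool => if 1 ≤ n ∧ t = true then x n else 0) ∘ fun b => b n := by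
      ext b
      simp [Set.indicator_apply]
    rw [h]
    exact continuous_of_discreteTopology.comp (continuous_apply n)
  have hE : achievementSet x = range F := by
    ext y
    constructor
    · rintro ⟨A, hA, hy⟩
      refine ⟨fun n => decide (n ∈ A), ?_⟩
      have hset : {n | 1 ≤ n ∧ decide (n ∈ A) = true} = A := by
        ext n
        simpa using fun h => hA h
      simp only [F, hset]
      exact (hasSum_subtype_iff_indicator.mp hy).tsum_eq
    · rintro ⟨b, rfl⟩
      exact ⟨{n | 1 ≤ n ∧ b n = true}, fun n hn => hn.1,
        hasSum_subtype_iff_indicator.mpr (hsum.indicator _).hasSum⟩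
  rw [hE]
  exact isCompact_range hF

/-- Toggling the membership of `n` in the index set moves a subsum by exactly `x n`. -/
theorem add_or_sub_mem_achievementSet {x : ℕ → ℝ} {y : ℝ} (hy : y ∈ achievementSet x)
    {n : ℕ} (hn : 1 ≤ n) : y + x n ∈ achievementSet x ∨ y - x n ∈ achievementSet x := by
  classical
  obtain ⟨A, hA, hAy⟩ := hy
  have hAy' := hasSum_subtype_iff_indicator.mp hAy
  have hs : HasSum (({n} : Set ℕ).indicator x) (x n) := by
    simpa using hasSum_single (f := ({n} : Set ℕ).indicator x) n
      (fun m hm => by simp [hm])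
  by_cases hnA : n ∈ A
  · right
    refine ⟨A \ {n}, fun m hm => hA hm.1, hasSum_subtype_iff_indicator.mpr ?_⟩
    rw [Set.indicator_sdiff (singleton_subset_iff.mpr hnA)]
    exact hAy'.sub hs
  · left
    refine ⟨A ∪ {n}, union_subset hA (singleton_subset_iff.mpr hn),
      hasSum_subtype_iff_indicator.mpr ?_⟩
    rw [Set.indicator_union_of_disjoint (disjoint_singleton_right.mpr hnA)]
    exact hAy'.add hs

/-- (Kakeya) The achievement set of a convergent series of positive terms is a
compact and perfect subset of `ℝ`. -/
theorem achievementSet_compact_perfect (x : ℕ → ℝ)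
    (hpos : ∀ n, 1 ≤ n → 0 < x n) (hsum : Summable x) :
    IsCompact (achievementSet x) ∧ Perfect (achievementSet x) := by
  have hc := isCompact_achievementSet hsum
  refine ⟨hc, hc.isClosed, preperfect_iff_nhds.mpr fun y hy U hU => ?_⟩
  have hx := hsum.tendsto_atTop_zero
  have hadd : ∀ᶠ n in atTop, y + x n ∈ U :=
    (tendsto_const_nhds.add hx).eventually_mem (by simpa using hU)
  have hsub : ∀ᶠ n in atTop, y - x n ∈ U :=
    (tendsto_const_nhds.sub hx).eventually_mem (by simpa using hU)
  obtain ⟨n, h₁, h₂, hn⟩ := (hadd.and (hsub.and (eventually_ge_atTop 1))).exists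
  have hp := hpos n hn
  rcases add_or_sub_mem_achievementSet hy hn with h | h
  · exact ⟨_, ⟨h₁, h⟩, (by linarith : y < y + x n).ne'⟩
  · exact ⟨_, ⟨h₂, h⟩, (by linarith : y - x n < y).ne⟩
end

section
/- (Guthrie–Nymann Classification Theorem) Let x : ℕ → ℝ satisfy ∑ₙ |x(n)| < ∞. Then the achievement set E(x) is of exactly one of the following four types: (i) a finite set; (ii) a multi-interval set; (iii) a Cantor set; (iv) a Cantorval. -/
/-!
Let `E` be the achievement set.  Toggling the membership of the negative terms shows that `E` is a
translate of the set of subsums of `|x|`, and zero terms can be dropped, so the terms may be taken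
positive.  If there are finitely many of them, `E` is finite.  Otherwise `E` is compact (a
continuous image of `ℕ → Bool`), has no isolated points (toggle a small term), and is symmetric
(`sub_mem_subsums`).

If `E` contains no interval, it is a Cantor set (`isCantorSet_of_perfect`): splitting it repeatedly
at points of the complement encodes its points by sequences of bits.

Suppose that `E` contains an interval.  For a finite set `F` of indices, `E` is a finite union of
translates of the subsums of the remaining terms (`subsums_eq_add`), hence every tail also has an
interval among its subsums.  If `b` is the right endpoint of a gap and the tail is shorter than the
gap, then `b` is a subsum over `F` (`right_endpoint_mem`), and to the right of `b` the set `E`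
coincides locally with `b` plus the subsums of the tail.  So intervals of `E` accumulate at `b`.
If gaps do not, then the subsums of the tail contain some `(0, δ)`, and an exchange argument
(`subsums_eq_Icc`) shows that the terms below `δ` have an interval as their set of subsums; thus
`E` is a finite union of translates of an interval, a multi-interval.  Consequently, if `E` is not
a multi-interval, then it is a Cantorval; left endpoints are treated by symmetry.

The types exclude each other: finite sets and Cantor sets contain no intervals, Cantor sets are
infinite, and the gaps of a multi-interval do not accumulate.
-/

open Set Filter Topology MeasureTheory
open scoped Pointwise

/-! ### Compact perfect subsets of the line with empty interior -/

/-- A block of `K`: a pair `a < b` of points of `K` such that `a` is a right limit and `b` is a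
left limit of points of `K`.  If `K` is perfect, so is `K ∩ [a, b]`. -/
def IsBlock (K : Set ℝ) (p : ℝ × ℝ) : Prop :=
  p.1 < p.2 ∧ p.1 ∈ K ∧ p.2 ∈ K ∧ (∀ ε > 0, ∃ z ∈ K, p.1 < z ∧ z < p.1 + ε) ∧
    (∀ ε > 0, ∃ z ∈ K, p.2 - ε < z ∧ z < p.2)

/-- Every block of `K` splits at a point `t ∉ K` of its middle third into two blocks, each at
most two thirds as long. -/
lemma IsBlock.exists_split {K : Set ℝ} (hK : IsCompact K)
    (hperf : ∀ y ∈ K, ∀ ε > 0, ∃ z ∈ K, z ≠ y ∧ |z - y| < ε)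
    (hinterval : ∀ u v : ℝ, u < v → ∃ t, u < t ∧ t < v ∧ t ∉ K) (p : {p // IsBlock K p}) :
    ∃ (t : ℝ) (l r : {p // IsBlock K p}), t ∉ K ∧ l.1.1 = p.1.1 ∧ r.1.2 = p.1.2 ∧
      l.1.2 < t ∧ t < r.1.1 ∧ l.1.2 - l.1.1 ≤ 2 / 3 * (p.1.2 - p.1.1) ∧
      r.1.2 - r.1.1 ≤ 2 / 3 * (p.1.2 - p.1.1) ∧
      (∀ y ∈ K, y < t → y ≤ l.1.2) ∧ (∀ y ∈ K, t < y → r.1.1 ≤ y) := by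
  obtain ⟨⟨a, b⟩, hab, ha, hb, har, hbl⟩ := p
  simp only at hab ha hb har hbl ⊢
  obtain ⟨t, ht1, ht2, htK⟩ := hinterval (a + (b - a) / 3) (b - (b - a) / 3) (by linarith)
  have hL : IsCompact (K ∩ Iic t) := hK.inter_right isClosed_Iic
  have hR : IsCompact (K ∩ Ici t) := hK.inter_right isClosed_Ici
  obtain ⟨c, ⟨hcK, hct⟩, hcmax⟩ := hL.exists_isGreatest ⟨a, ha, by simp; linarith⟩
  obtain ⟨d, ⟨hdK, hdt⟩, hdmin⟩ := hR.exists_isLeast ⟨b, hb, by simp; linarith⟩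
  simp only [mem_Iic, mem_Ici] at hct hdt
  have hct' : c < t := lt_of_le_of_ne hct (fun h => htK (h ▸ hcK))
  have hdt' : t < d := lt_of_le_of_ne hdt (fun h => htK (h ▸ hdK))
  have hac : a < c := by
    obtain ⟨z, hz, hz1, hz2⟩ := har ((b - a) / 3) (by linarith)
    exact hz1.trans_le (hcmax ⟨hz, by simp; linarith⟩)
  have hdb : d < b := by
    obtain ⟨z, hz, hz1, hz2⟩ := hbl ((b - a) / 3) (by linarith)
    exact (hdmin ⟨hz, by simp; linarith⟩).trans_lt hz2
  refine ⟨t, ⟨(a, c), hac, ha, hcK, har, ?_⟩, ⟨(d, b), hdb, hdK, hb, ?_, hbl⟩, htK, rfl, rfl,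
    hct', hdt', by simp only; linarith, by simp only; linarith, ?_, ?_⟩
  · intro ε hε
    obtain ⟨z, hz, hzc, hze⟩ := hperf c hcK (min ε (t - c)) (lt_min hε (by linarith))
    rw [abs_lt, lt_min_iff] at hze
    obtain ⟨h1, h2, h3⟩ := hze
    have := min_le_left ε (t - c)
    refine ⟨z, hz, by simp only; linarith, lt_of_le_of_ne ?_ hzc⟩
    exact hcmax ⟨hz, by simp; linarith⟩
  · intro ε hε
    obtain ⟨z, hz, hzc, hze⟩ := hperf d hdK (min ε (d - t)) (lt_min hε (by linarith))
    rw [abs_lt, lt_min_iff] at hze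
    obtain ⟨h1, h2, h3⟩ := hze
    have := min_le_right ε (d - t)
    refine ⟨z, hz, lt_of_le_of_ne ?_ (Ne.symm hzc), by simp only; linarith⟩
    exact hdmin ⟨hz, by simp; linarith⟩
  · exact fun y hy hyt => hcmax ⟨hy, hyt.le⟩
  · exact fun y hy hyt => hdmin ⟨hy, hyt.le⟩

/-- The iterated binary splitting of the blocks of `K` assigns to each point of `K` its itinerary
in `ℕ → Bool`; this is a continuous bijection of compact Hausdorff spaces. -/
lemma isCantorSet_of_perfect {K : Set ℝ} (hK : IsCompact K) (hne : K.Nonempty)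
    (hperf : ∀ y ∈ K, ∀ ε > 0, ∃ z ∈ K, z ≠ y ∧ |z - y| < ε)
    (hinterval : ∀ u v : ℝ, u < v → ∃ t, u < t ∧ t < v ∧ t ∉ K) : IsCantorSet K := by
  classical
  obtain ⟨a, haK, hamin⟩ := hK.exists_isLeast hne
  obtain ⟨b, hbK, hbmax⟩ := hK.exists_isGreatest hne
  have har : ∀ ε > 0, ∃ z ∈ K, a < z ∧ z < a + ε := by
    intro ε hε
    obtain ⟨z, hz, hza, hze⟩ := hperf a haK ε hε
    exact ⟨z, hz, lt_of_le_of_ne (hamin hz) (Ne.symm hza), by linarith [(abs_lt.1 hze).2]⟩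
  have hbl : ∀ ε > 0, ∃ z ∈ K, b - ε < z ∧ z < b := by
    intro ε hε
    obtain ⟨z, hz, hza, hze⟩ := hperf b hbK ε hε
    exact ⟨z, hz, by linarith [(abs_lt.1 hze).1], lt_of_le_of_ne (hbmax hz) hza⟩
  have hab : a < b := by
    obtain ⟨z, hz, hza, -⟩ := har 1 one_pos
    exact hza.trans_le (hbmax hz)
  let p₀ : {p // IsBlock K p} := ⟨(a, b), hab, haK, hbK, har, hbl⟩
  choose t l r htK hla hrb hlt hrt hll hrl hleft hright using
    IsBlock.exists_split hK hperf hinterval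
  -- `st β n` is the block reached after following the digits `β 0, …, β (n - 1)`
  let step : {p // IsBlock K p} → Bool → {p // IsBlock K p} :=
    fun p e => if e then r p else l p
  let st : (ℕ → Bool) → ℕ → {p // IsBlock K p} :=
    fun β n => Nat.rec p₀ (fun k p => step p (β k)) n
  have st_succ : ∀ β n, st β (n + 1) = step (st β n) (β n) := fun _ _ => rfl
  -- `it y n` is the block containing `y` at stage `n`
  let it : ℝ → ℕ → {p // IsBlock K p} :=
    fun y n => Nat.rec p₀ (fun _ p => step p (decide (t p < y))) n
  have it_succ : ∀ y n, it y (n + 1) = step (it y n) (decide (t (it y n) < y)) := fun _ _ => rfl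
  let g : K → ℕ → Bool := fun y n => decide (t (it y n) < y)
  have it_eq : ∀ y : K, ∀ n, it y n = st (g y) n := by
    intro y n
    induction n with
    | zero => rfl
    | succ n ih => rw [it_succ, st_succ, ← ih]
  have hlen : ∀ β n, (st β n).1.2 - (st β n).1.1 ≤ (2 / 3 : ℝ) ^ n * (b - a) := by
    intro β n
    induction n with
    | zero => simp [st, p₀]
    | succ n ih =>
      have h1 := hll (st β n)
      have h2 := hrl (st β n)
      rw [st_succ, pow_succ]
      cases h : β n <;> simp only [step, if_true, if_false, Bool.false_eq_true] <;> linarith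
  have hmem : ∀ y : K, ∀ n, (it y n).1.1 ≤ y ∧ (y : ℝ) ≤ (it y n).1.2 := by
    intro y n
    induction n with
    | zero => exact ⟨hamin y.2, hbmax y.2⟩
    | succ n ih =>
      rw [it_succ]
      by_cases h : t (it y n) < y
      · simp only [step, h, decide_true, if_true]
        exact ⟨hright _ _ y.2 h, by rw [hrb]; exact ih.2⟩
      · simp only [step, h, decide_false, if_false, Bool.false_eq_true]
        refine ⟨by rw [hla]; exact ih.1, hleft _ _ y.2 (lt_of_le_of_ne (not_lt.1 h) ?_)⟩
        exact fun hh => htK _ (hh ▸ y.2)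
  have hlim : Tendsto (fun n : ℕ => (2 / 3 : ℝ) ^ n * (b - a)) atTop (𝓝 0) := by
    simpa using (tendsto_pow_atTop_nhds_zero_of_lt_one (r := (2 / 3 : ℝ))
      (by norm_num) (by norm_num)).mul_const (b - a)
  have hinj : Function.Injective g := by
    intro y z hyz
    have key : ∀ n, |(y : ℝ) - z| ≤ (2 / 3 : ℝ) ^ n * (b - a) := by
      intro n
      have h1 := hmem y n
      have h2 := hmem z n
      rw [it_eq] at h1 h2
      rw [← hyz] at h2
      have h3 := hlen (g y) n
      rw [abs_le]
      constructor <;> linarith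
    have h0 : |(y : ℝ) - z| ≤ 0 := ge_of_tendsto' hlim key
    exact Subtype.ext (sub_eq_zero.1 (abs_nonpos_iff.1 h0))
  have hcont : Continuous g := by
    have hit : ∀ n, ∀ y : K, ∀ᶠ z : K in 𝓝 y, it z n = it y n := by
      intro n
      induction n with
      | zero => exact fun y => Eventually.of_forall fun z => rfl
      | succ n ih =>
        intro y
        have hy : t (it y n) ≠ y := fun hh => htK _ (hh ▸ y.2)
        rcases lt_or_gt_of_ne hy with h | h
        · filter_upwards [ih y, continuous_subtype_val.continuousAt.eventually (lt_mem_nhds h)]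
            with z hz hz'
          rw [it_succ, it_succ, hz]
          simp [h, hz']
        · filter_upwards [ih y, continuous_subtype_val.continuousAt.eventually (gt_mem_nhds h)]
            with z hz hz'
          rw [it_succ, it_succ, hz]
          simp [not_lt.2 h.le, not_lt.2 hz'.le]
    refine continuous_pi fun n => continuous_iff_continuousAt.2 fun y => ?_
    refine ContinuousAt.congr (f := fun _ => g y n) continuousAt_const ?_
    have hy : t (it y n) ≠ y := fun hh => htK _ (hh ▸ y.2)
    rcases lt_or_gt_of_ne hy with h | h
    · filter_upwards [hit n y, continuous_subtype_val.continuousAt.eventually (lt_mem_nhds h)]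
        with z hz hz'
      simp [g, hz, h, hz']
    · filter_upwards [hit n y, continuous_subtype_val.continuousAt.eventually (gt_mem_nhds h)]
        with z hz hz'
      simp [g, hz, not_lt.2 h.le, not_lt.2 hz'.le]
  have hsurj : Function.Surjective g := by
    intro β
    have hanti : ∀ n, K ∩ Icc (st β (n + 1)).1.1 (st β (n + 1)).1.2 ⊆
        K ∩ Icc (st β n).1.1 (st β n).1.2 := by
      intro n
      refine inter_subset_inter_right _ (Icc_subset_Icc ?_ ?_)
      · rw [st_succ]
        cases h : β n <;> simp only [step, if_true, if_false, Bool.false_eq_true]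
        · rw [hla]
        · linarith [hlt (st β n), hrt (st β n), (l (st β n)).2.1, hla (st β n)]
      · rw [st_succ]
        cases h : β n <;> simp only [step, if_true, if_false, Bool.false_eq_true]
        · linarith [hlt (st β n), hrt (st β n), (r (st β n)).2.1, hrb (st β n)]
        · rw [hrb]
    obtain ⟨y, hy⟩ := IsCompact.nonempty_iInter_of_sequence_nonempty_isCompact_isClosed
      (fun n => K ∩ Icc (st β n).1.1 (st β n).1.2) hanti
      (fun n => ⟨(st β n).1.1, (st β n).2.2.1, le_rfl, (st β n).2.1.le⟩)
      (hK.inter_right isClosed_Icc) (fun n => hK.isClosed.inter isClosed_Icc)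
    rw [mem_iInter] at hy
    refine ⟨⟨y, (hy 0).1⟩, ?_⟩
    have hdig : ∀ n, decide (t (st β n) < y) = β n := by
      intro n
      have h := (hy (n + 1)).2
      rw [st_succ] at h
      cases hb : β n <;> rw [hb] at h <;>
        simp only [step, if_true, if_false, Bool.false_eq_true, mem_Icc] at h
      · simpa using h.2.trans (hlt _).le
      · simpa using (hrt _).trans_le h.1
    have hst : ∀ n, it y n = st β n := by
      intro n
      induction n with
      | zero => rfl
      | succ n ih => rw [it_succ, st_succ, ih, hdig]
    funext n
    change decide (t (it y n) < y) = β n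
    rw [hst, hdig]
  have : CompactSpace K := isCompact_iff_compactSpace.1 hK
  exact ⟨(hcont.homeoOfEquivCompactToT2 (f := Equiv.ofBijective g ⟨hinj, hsurj⟩)).trans
    cantorSetHomeomorphNatToBool.symm⟩

/-! ### Subsums over an index set -/

/-- The set of subsums `∑_{n ∈ A} x n` with `A ⊆ S`. -/
def subsums (x : ℕ → ℝ) (S : Set ℕ) : Set ℝ :=
  {y | ∃ A ⊆ S, ∑' n, A.indicator x n = y}

lemma isCompact_subsums {x : ℕ → ℝ} (hx : Summable x) (hnn : ∀ n, 0 ≤ x n) (S : Set ℕ) :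
    IsCompact (subsums x S) := by
  classical
  let f : (ℕ → Bool) → ℝ := fun β => ∑' n, if β n = true ∧ n ∈ S then x n else 0
  have hf : Continuous f := by
    refine continuous_tsum (u := x) (fun n => ?_) hx (fun n β => ?_)
    · exact (continuous_of_discreteTopology
        (f := fun e : Bool => if e = true ∧ n ∈ S then x n else 0)).comp (continuous_apply n)
    · split_ifs
      · simp [abs_of_nonneg (hnn n)]
      · simpa using hnn n
  have : subsums x S = range f := by
    ext y
    constructor
    · rintro ⟨A, hA, rfl⟩
      refine ⟨fun n => decide (n ∈ A), tsum_congr fun n => ?_⟩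
      by_cases h : n ∈ A
      · simp [h, hA h]
      · simp [h]
    · rintro ⟨β, rfl⟩
      refine ⟨{n | β n = true ∧ n ∈ S}, fun n hn => hn.2, tsum_congr fun n => ?_⟩
      simp [indicator_apply]
  rw [this]
  exact isCompact_range hf

lemma tsum_indicator_union {x : ℕ → ℝ} (hx : Summable x) {A B : Set ℕ} (h : Disjoint A B) :
    ∑' n, (A ∪ B).indicator x n = ∑' n, A.indicator x n + ∑' n, B.indicator x n := by
  rw [indicator_union_of_disjoint h]
  exact (hx.indicator A).tsum_add (hx.indicator B)

lemma tsum_indicator_diff {x : ℕ → ℝ} (hx : Summable x) {A B : Set ℕ} (h : B ⊆ A) :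
    ∑' n, (A \ B).indicator x n = ∑' n, A.indicator x n - ∑' n, B.indicator x n := by
  have := tsum_indicator_union hx (disjoint_sdiff_right : Disjoint B (A \ B))
  rw [union_sdiff_cancel h] at this
  linarith

lemma tsum_indicator_singleton (x : ℕ → ℝ) (k : ℕ) :
    ∑' n, ({k} : Set ℕ).indicator x n = x k := by
  rw [tsum_eq_single k (fun n hn => by simp [hn])]
  simp

lemma tsum_indicator_mono {x : ℕ → ℝ} (hx : Summable x) (hnn : ∀ n, 0 ≤ x n) {A B : Set ℕ}
    (h : A ⊆ B) : ∑' n, A.indicator x n ≤ ∑' n, B.indicator x n :=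
  (hx.indicator A).tsum_le_tsum (fun n => indicator_le_indicator_of_subset h hnn n)
    (hx.indicator B)

lemma zero_mem_subsums (x : ℕ → ℝ) (S : Set ℕ) : 0 ∈ subsums x S :=
  ⟨∅, empty_subset _, by simp⟩

lemma nonneg_of_mem_subsums {x : ℕ → ℝ} (hnn : ∀ n, 0 ≤ x n) {S : Set ℕ} {y : ℝ}
    (hy : y ∈ subsums x S) : 0 ≤ y := by
  obtain ⟨A, -, rfl⟩ := hy
  exact tsum_nonneg fun n => indicator_nonneg (fun n _ => hnn n) n

lemma le_of_mem_subsums {x : ℕ → ℝ} (hx : Summable x) (hnn : ∀ n, 0 ≤ x n) {S : Set ℕ} {y : ℝ}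
    (hy : y ∈ subsums x S) : y ≤ ∑' n, S.indicator x n := by
  obtain ⟨A, hA, rfl⟩ := hy
  exact tsum_indicator_mono hx hnn hA

lemma subsums_mono (x : ℕ → ℝ) {S T : Set ℕ} (h : S ⊆ T) : subsums x S ⊆ subsums x T := by
  rintro y ⟨A, hA, rfl⟩
  exact ⟨A, hA.trans h, rfl⟩

/-- Passing to complementary index sets, `subsums x S` is symmetric. -/
lemma sub_mem_subsums {x : ℕ → ℝ} (hx : Summable x) {S : Set ℕ} {y : ℝ}
    (hy : y ∈ subsums x S) : ∑' n, S.indicator x n - y ∈ subsums x S := by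
  obtain ⟨A, hA, rfl⟩ := hy
  exact ⟨S \ A, sdiff_subset, tsum_indicator_diff hx hA⟩

lemma subsums_eq_add {x : ℕ → ℝ} (hx : Summable x) {S F : Set ℕ} (hF : F ⊆ S) :
    subsums x S = subsums x F + subsums x (S \ F) := by
  ext y
  rw [Set.mem_add]
  constructor
  · rintro ⟨A, hA, rfl⟩
    refine ⟨_, ⟨A ∩ F, inter_subset_right, rfl⟩, _, ⟨A \ F, sdiff_subset_sdiff_left hA, rfl⟩, ?_⟩
    rw [← tsum_indicator_union hx, inter_union_sdiff]
    exact disjoint_sdiff_right.mono_left inter_subset_right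
  · rintro ⟨_, ⟨A, hA, rfl⟩, _, ⟨B, hB, rfl⟩, rfl⟩
    refine ⟨A ∪ B, union_subset (hA.trans hF) (hB.trans sdiff_subset), ?_⟩
    exact tsum_indicator_union hx (disjoint_sdiff_right.mono hA hB)

lemma finite_subsums (x : ℕ → ℝ) {F : Set ℕ} (hF : F.Finite) : (subsums x F).Finite := by
  refine (hF.finite_subsets.image fun A => ∑' n, A.indicator x n).subset ?_
  rintro y ⟨A, hA, rfl⟩
  exact ⟨A, hA, rfl⟩

lemma exists_finite_tail_lt {x : ℕ → ℝ} (hx : Summable x) (S : Set ℕ) {ε : ℝ} (hε : 0 < ε) :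
    ∃ F ⊆ S, F.Finite ∧ ∑' n, (S \ F).indicator x n < ε := by
  have h := (hx.indicator S).hasSum
  obtain ⟨s, hs⟩ := (h.eventually (lt_mem_nhds (sub_lt_self _ hε))).exists
  refine ⟨S ∩ s, inter_subset_left, s.finite_toSet.subset inter_subset_right, ?_⟩
  rw [tsum_indicator_diff hx inter_subset_left]
  have : ∑' n, (S ∩ (s : Set ℕ)).indicator x n = ∑ n ∈ s, S.indicator x n := by
    rw [sum_eq_tsum_indicator, indicator_indicator, inter_comm]
  rw [this]
  linarith

lemma finite_setOf_le {x : ℕ → ℝ} (hx : Summable x) {δ : ℝ} (hδ : 0 < δ) :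
    {n | δ ≤ x n}.Finite := by
  have h := hx.tendsto_cofinite_zero.eventually (gt_mem_nhds hδ)
  rw [eventually_cofinite] at h
  simpa using h

/-- Toggling the membership of a small term `x n` moves a subsum by exactly `x n`. -/
lemma subsums_perfect {x : ℕ → ℝ} (hx : Summable x) {S : Set ℕ} (hS : S.Infinite)
    (hpos : ∀ n ∈ S, 0 < x n) :
    ∀ y ∈ subsums x S, ∀ ε > 0, ∃ z ∈ subsums x S, z ≠ y ∧ |z - y| < ε := by
  rintro y ⟨A, hA, rfl⟩ ε hε
  obtain ⟨n, hnS, hn⟩ := hS.exists_notMem_finite (finite_setOf_le hx hε)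
  have hlt : x n < ε := not_le.1 hn
  have h0 := hpos n hnS
  by_cases hnA : n ∈ A
  · refine ⟨_, ⟨A \ {n}, sdiff_subset.trans hA, rfl⟩, ?_⟩
    rw [tsum_indicator_diff hx (by simpa using hnA), tsum_indicator_singleton]
    refine ⟨by linarith, ?_⟩
    rw [abs_lt]; constructor <;> linarith
  · refine ⟨_, ⟨A ∪ {n}, union_subset hA (by simpa using hnS), rfl⟩, ?_⟩
    rw [tsum_indicator_union hx (by simpa using hnA), tsum_indicator_singleton]
    refine ⟨by linarith, ?_⟩
    rw [abs_lt]; constructor <;> linarith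

/-- If `subsums x S` contains an interval, so does the set of subsums of every tail: a finite
union of closed sets with empty interior has empty interior. -/
lemma exists_Icc_subset_tail {x : ℕ → ℝ} (hx : Summable x) (hnn : ∀ n, 0 ≤ x n) {S F : Set ℕ}
    (hFS : F ⊆ S) (hF : F.Finite) (h : ∃ u v : ℝ, u < v ∧ Icc u v ⊆ subsums x S) :
    ∃ u v : ℝ, u < v ∧ Icc u v ⊆ subsums x (S \ F) := by
  have hcl : IsClosed (subsums x (S \ F)) := (isCompact_subsums hx hnn _).isClosed
  have hne : (interior (subsums x (S \ F))).Nonempty := by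
    by_contra hemp
    rw [not_nonempty_iff_eq_empty] at hemp
    have key : ∀ P : Set ℝ, P.Finite → IsClosed (P + subsums x (S \ F)) ∧
        interior (P + subsums x (S \ F)) = ∅ := by
      intro P hP
      induction P, hP using Set.Finite.induction_on with
      | empty => simp
      | @insert p P _ _ ih =>
        have h1 : insert p P + subsums x (S \ F) =
            (Homeomorph.addLeft p) '' (subsums x (S \ F)) ∪ (P + subsums x (S \ F)) := by
          rw [insert_eq, union_add, singleton_add]
          rfl
        have h2 : IsClosed ((Homeomorph.addLeft p) '' (subsums x (S \ F))) :=
          (Homeomorph.isClosed_image _).2 hcl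
        rw [h1]
        refine ⟨h2.union ih.1, ?_⟩
        rw [interior_union_isClosed_of_interior_empty h2 ih.2, ← Homeomorph.image_interior, hemp,
          image_empty]
    obtain ⟨u, v, huv, hsub⟩ := h
    rw [subsums_eq_add hx hFS] at hsub
    have h3 := interior_mono hsub
    rw [(key _ (finite_subsums x hF)).2, interior_Icc] at h3
    exact (nonempty_Ioo.2 huv).ne_empty (subset_empty_iff.1 h3)
  obtain ⟨y, hy⟩ := hne
  obtain ⟨ε, hε, hball⟩ := Metric.isOpen_iff.1 isOpen_interior y hy
  refine ⟨y, y + ε / 2, by linarith, fun z hz => interior_subset (hball ?_)⟩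
  rw [Metric.mem_ball, Real.dist_eq, abs_lt]
  constructor <;> linarith [hz.1, hz.2]

/-- If all terms are smaller than `δ` and every number in `(0, δ)` is a subsum, then there are no
gaps.  Given `t`, take the largest subsum `s = ∑_A x` not exceeding `t`.  If `s < t`, let `x n` be
the smallest term not in `A`; it exceeds `t - s`, and `x n - (t - s) ∈ (0, δ)` is a subsum `∑_B x`
made of terms smaller than `x n`, hence of terms from `A`.  Exchanging `B` for `n` in `A` produces
the subsum `t`. -/
lemma subsums_eq_Icc {x : ℕ → ℝ} (hx : Summable x) (hnn : ∀ n, 0 ≤ x n) {T : Set ℕ} {δ : ℝ}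
    (hpos : ∀ n ∈ T, 0 < x n) (hlt : ∀ n ∈ T, x n < δ) (hsub : Ioo 0 δ ⊆ subsums x T) :
    subsums x T = Icc 0 (∑' n, T.indicator x n) := by
  refine Subset.antisymm
    (fun y hy => ⟨nonneg_of_mem_subsums hnn hy, le_of_mem_subsums hx hnn hy⟩) ?_
  rintro t ⟨ht0, htr⟩
  obtain ⟨s, ⟨⟨A, hA, hAs⟩, hst⟩, hmax⟩ :=
    ((isCompact_subsums hx hnn T).inter_right isClosed_Iic).exists_isGreatest
      ⟨0, zero_mem_subsums x T, ht0⟩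
  rcases eq_or_lt_of_le (mem_Iic.1 hst) with rfl | hst
  · exact ⟨A, hA, hAs⟩
  have hbig : ∀ n ∈ T \ A, t - s < x n := by
    intro n hn
    by_contra! hle
    have h1 : s + x n ∈ subsums x T := by
      refine ⟨A ∪ {n}, union_subset hA (by simpa using hn.1), ?_⟩
      rw [tsum_indicator_union hx (by simpa using hn.2), tsum_indicator_singleton, hAs]
    have h2 := hmax ⟨h1, mem_Iic.2 (by linarith)⟩
    linarith [hpos n hn.1]
  have hTA : (T \ A).Nonempty := by
    rw [sdiff_nonempty]
    intro h
    rw [Subset.antisymm h hA, hAs] at htr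
    linarith
  have hfin : (T \ A).Finite :=
    (finite_setOf_le hx (sub_pos.2 hst)).subset fun n hn => (hbig n hn).le
  obtain ⟨n, hn, hmin⟩ := exists_min_image _ x hfin hTA
  obtain ⟨B, hB, hBs⟩ := hsub ⟨sub_pos.2 (hbig n hn),
    (by linarith [hlt n hn.1] : x n - (t - s) < δ)⟩
  have hBA : B ⊆ A := by
    intro k hk
    by_contra hkA
    have h1 := hmin k ⟨hB hk, hkA⟩
    have h2 := tsum_indicator_mono hx hnn (singleton_subset_iff.2 hk)
    rw [tsum_indicator_singleton, hBs] at h2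
    linarith
  refine ⟨A \ B ∪ {n}, union_subset (sdiff_subset.trans hA) (by simpa using hn.1), ?_⟩
  rw [tsum_indicator_union hx (by simpa using fun h => absurd h hn.2), tsum_indicator_singleton,
    tsum_indicator_diff hx hBA, hAs, hBs]
  ring

/-! ### Multi-intervals and the right endpoints of gaps -/

lemma isMultiInterval_Icc {a b : ℝ} (h : a < b) : IsMultiInterval (Icc a b) :=
  ⟨{(a, b)}, by simp, by simpa using h, by simp⟩

lemma IsMultiInterval.finite_add {P E : Set ℝ} (hP : P.Finite) (hne : P.Nonempty)
    (hE : IsMultiInterval E) : IsMultiInterval (P + E) := by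
  classical
  obtain ⟨S, hS, hlt, rfl⟩ := hE
  refine ⟨(hP.toFinset ×ˢ S).image fun q => (q.1 + q.2.1, q.1 + q.2.2), ?_, ?_, ?_⟩
  · exact (Finset.Nonempty.product (by simpa using hne) hS).image _
  · intro p hp
    simp only [Finset.mem_image, Finset.mem_product] at hp
    obtain ⟨q, ⟨-, hq⟩, rfl⟩ := hp
    simpa using hlt _ hq
  · ext y
    simp only [Set.mem_add, mem_iUnion, exists_prop, Finset.mem_image, Finset.mem_product,
      Finite.mem_toFinset]
    constructor
    · rintro ⟨f, hf, e, ⟨p, hp, he⟩, rfl⟩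
      exact ⟨_, ⟨(f, p), ⟨hf, hp⟩, rfl⟩, by simpa using he⟩
    · rintro ⟨_, ⟨⟨f, p⟩, ⟨hf, hp⟩, rfl⟩, hy⟩
      refine ⟨f, hf, y - f, ⟨p, hp, ?_⟩, by ring⟩
      simp only [mem_Icc] at hy ⊢
      constructor <;> linarith [hy.1, hy.2]

lemma isMultiInterval_of_tail {x : ℕ → ℝ} (hx : Summable x) {S F : Set ℕ} (hFS : F ⊆ S)
    (hF : F.Finite) (h : IsMultiInterval (subsums x (S \ F))) : IsMultiInterval (subsums x S) := by
  rw [subsums_eq_add hx hFS]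
  exact h.finite_add (finite_subsums x hF) ⟨0, zero_mem_subsums x F⟩

/-- If no gap of `subsums x S` is near its minimum `0`, then `subsums x S` is a multi-interval:
subsums below `δ` only involve the terms below `δ`, so those terms satisfy `subsums_eq_Icc`. -/
lemma isMultiInterval_of_Ioo_subset {x : ℕ → ℝ} (hx : Summable x) (hnn : ∀ n, 0 ≤ x n) {S : Set ℕ}
    (hS : S.Infinite) (hpos : ∀ n ∈ S, 0 < x n) {δ : ℝ} (hδ : 0 < δ)
    (hsub : Ioo 0 δ ⊆ subsums x S) : IsMultiInterval (subsums x S) := by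
  have hfin : (S ∩ {n | δ ≤ x n}).Finite := (finite_setOf_le hx hδ).subset inter_subset_right
  refine isMultiInterval_of_tail hx inter_subset_left hfin ?_
  have hlt : ∀ n ∈ S \ (S ∩ {n | δ ≤ x n}), x n < δ := by
    rintro n ⟨hnS, hn⟩
    by_contra! h
    exact hn ⟨hnS, h⟩
  rw [subsums_eq_Icc hx hnn (fun n hn => hpos n hn.1) hlt]
  · obtain ⟨n, hn⟩ := (hS.sdiff hfin).nonempty
    have := tsum_indicator_mono hx hnn (singleton_subset_iff.2 hn)
    rw [tsum_indicator_singleton] at this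
    exact isMultiInterval_Icc ((hpos n hn.1).trans_le this)
  · intro t ht
    obtain ⟨A, hA, hAt⟩ := hsub ht
    refine ⟨A, fun n hn => ⟨hA hn, fun h => ?_⟩, hAt⟩
    have h2 := tsum_indicator_mono hx hnn (singleton_subset_iff.2 hn)
    rw [tsum_indicator_singleton, hAt] at h2
    linarith [ht.2, h.2.out]

/-- The right endpoint `b` of a gap is a subsum of every finite block of terms whose tail is
shorter than the gap. -/
lemma right_endpoint_mem {x : ℕ → ℝ} (hx : Summable x) (hnn : ∀ n, 0 ≤ x n) {S F : Set ℕ}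
    (hFS : F ⊆ S) {a b : ℝ} (hb : b ∈ subsums x S)
    (hgap : ∀ t ∈ subsums x S, a < t → b ≤ t)
    (htail : ∑' n, (S \ F).indicator x n < b - a) : b ∈ subsums x F := by
  have hb' := hb
  rw [subsums_eq_add hx hFS, Set.mem_add] at hb'
  obtain ⟨f, hf, e, he, hfe⟩ := hb'
  have h1 := nonneg_of_mem_subsums hnn he
  have h2 := le_of_mem_subsums hx hnn he
  have h3 := hgap f (subsums_mono x hFS hf) (by linarith)
  obtain rfl : f = b := by linarith
  exact hf

/-- To the right of a gap there are arbitrarily close intervals: `b` plus the subsums of a short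
tail. -/
lemma intervals_near_right_endpoint {x : ℕ → ℝ} (hx : Summable x) (hnn : ∀ n, 0 ≤ x n)
    {S : Set ℕ} (hinterval : ∃ u v : ℝ, u < v ∧ Icc u v ⊆ subsums x S) {a b : ℝ} (hab : a < b)
    (hb : b ∈ subsums x S) (hgap : ∀ t ∈ subsums x S, a < t → b ≤ t) {ε : ℝ} (hε : 0 < ε) :
    ∃ u v : ℝ, b < u ∧ u < v ∧ v < b + ε ∧ Icc u v ⊆ subsums x S := by
  obtain ⟨F, hFS, hF, htail⟩ := exists_finite_tail_lt hx S (lt_min (sub_pos.2 hab) hε)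
  rw [lt_min_iff] at htail
  have hbF := right_endpoint_mem hx hnn hFS hb hgap htail.1
  obtain ⟨u, v, huv, hsub⟩ := exists_Icc_subset_tail hx hnn hFS hF hinterval
  have hu := nonneg_of_mem_subsums hnn (hsub (left_mem_Icc.2 huv.le))
  have hv := le_of_mem_subsums hx hnn (hsub (right_mem_Icc.2 huv.le))
  refine ⟨b + (u + v) / 2, b + v, by linarith, by linarith, by linarith, fun z hz => ?_⟩
  rw [subsums_eq_add hx hFS]
  refine Set.mem_add.2 ⟨b, hbF, z - b, hsub ⟨?_, ?_⟩, by ring⟩ <;> linarith [hz.1, hz.2]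

/-- To the right of a gap there are arbitrarily close points of the complement, unless the set is a
multi-interval: to the right of `b`, the set is locally a translate by `b` of the subsums of a tail. -/
lemma gaps_near_right_endpoint {x : ℕ → ℝ} (hx : Summable x) (hnn : ∀ n, 0 ≤ x n)
    {S : Set ℕ} (hS : S.Infinite) (hpos : ∀ n ∈ S, 0 < x n)
    (hmulti : ¬ IsMultiInterval (subsums x S)) {a b : ℝ} (hab : a < b)
    (hgap : ∀ t ∈ subsums x S, a < t → b ≤ t) {ε : ℝ} (hε : 0 < ε) :
    ∃ t, b < t ∧ t < b + ε ∧ t ∉ subsums x S := by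
  by_contra! hcon
  obtain ⟨F, hFS, hF, htail⟩ := exists_finite_tail_lt hx S (sub_pos.2 hab)
  have hfin : (subsums x F \ {b}).Finite := (finite_subsums x hF).subset sdiff_subset
  obtain ⟨η, hη, hball⟩ := Metric.isOpen_iff.1 hfin.isClosed.isOpen_compl b (by simp)
  refine hmulti (isMultiInterval_of_tail hx hFS hF ?_)
  refine isMultiInterval_of_Ioo_subset hx hnn (hS.sdiff hF) (fun n hn => hpos n hn.1)
    (lt_min hε hη) ?_
  rintro t ⟨ht0, ht⟩
  rw [lt_min_iff] at ht
  have h1 := hcon (b + t) (by linarith) (by linarith)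
  rw [subsums_eq_add hx hFS, Set.mem_add] at h1
  obtain ⟨f, hf, e, he, hfe⟩ := h1
  have h2 := nonneg_of_mem_subsums hnn he
  have h3 := le_of_mem_subsums hx hnn he
  have hbf : b ≤ f := hgap f (subsums_mono x hFS hf) (by linarith)
  have hfb : f = b := by
    by_contra hne
    refine hball ?_ ⟨hf, hne⟩
    rw [Metric.mem_ball, Real.dist_eq, abs_lt]
    constructor <;> linarith
  obtain rfl : e = t := by linarith
  exact he

/-! ### Gaps and components of compact sets -/

/-- The component of the complement through a point `t` between two points of `E` is a gap. -/
lemma gap_of_between {E : Set ℝ} {p q t : ℝ} (hp : p ∈ E) (hq : q ∈ E) (ht : t ∉ E) (hpt : p < t)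
    (htq : t < q) : connectedComponentIn Eᶜ t ⊆ Ioo p q ∧ connectedComponentIn Eᶜ t ∈ gaps E := by
  have hsub : connectedComponentIn Eᶜ t ⊆ Ioo p q := by
    intro s hs
    have hord := (isPreconnected_connectedComponentIn (F := Eᶜ) (x := t)).ordConnected
    have ht' : t ∈ connectedComponentIn Eᶜ t := mem_connectedComponentIn ht
    constructor
    · by_contra! h
      exact connectedComponentIn_subset _ _ (hord.out hs ht' ⟨h, hpt.le⟩) hp
    · by_contra! h
      exact connectedComponentIn_subset _ _ (hord.out ht' hs ⟨htq.le, h⟩) hq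
  exact ⟨hsub, ⟨t, ht, rfl⟩, Metric.isBounded_Ioo p q |>.subset hsub⟩

lemma gap_eq_Ioo {E : Set ℝ} (hE : IsCompact E) {G : Set ℝ} (hG : G ∈ gaps E) :
    ∃ a b, a < b ∧ a ∈ E ∧ b ∈ E ∧ G = Ioo a b := by
  obtain ⟨⟨t, ht, rfl⟩, hbd⟩ := hG
  have hlow : (E ∩ Iic t).Nonempty := by
    by_contra h
    rw [not_nonempty_iff_eq_empty] at h
    have h1 : Iic t ⊆ connectedComponentIn Eᶜ t :=
      isPreconnected_Iic.subset_connectedComponentIn self_mem_Iic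
        fun s hs hsE => (h ▸ ⟨hsE, hs⟩ : s ∈ (∅ : Set ℝ))
    exact not_bddBelow_Iic t (hbd.subset h1).bddBelow
  have hupp : (E ∩ Ici t).Nonempty := by
    by_contra h
    rw [not_nonempty_iff_eq_empty] at h
    have h1 : Ici t ⊆ connectedComponentIn Eᶜ t :=
      isPreconnected_Ici.subset_connectedComponentIn self_mem_Ici
        fun s hs hsE => (h ▸ ⟨hsE, hs⟩ : s ∈ (∅ : Set ℝ))
    exact not_bddAbove_Ici t (hbd.subset h1).bddAbove
  obtain ⟨a, ⟨haE, hat⟩, hamax⟩ := (hE.inter_right isClosed_Iic).exists_isGreatest hlow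
  obtain ⟨b, ⟨hbE, htb⟩, hbmin⟩ := (hE.inter_right isClosed_Ici).exists_isLeast hupp
  have hat' : a < t := lt_of_le_of_ne hat (fun h => ht (h ▸ haE))
  have htb' : t < b := lt_of_le_of_ne htb (fun h => ht (h ▸ hbE))
  refine ⟨a, b, hat'.trans htb', haE, hbE,
    Subset.antisymm (gap_of_between haE hbE ht hat' htb').1 ?_⟩
  refine isPreconnected_Ioo.subset_connectedComponentIn ⟨hat', htb'⟩ fun s hs hsE => ?_
  rcases le_total s t with h | h
  · exact absurd (hamax ⟨hsE, h⟩) (not_le.2 hs.1)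
  · exact absurd (hbmin ⟨hsE, h⟩) (not_le.2 hs.2)

lemma Ioo_disjoint_of_gap {E : Set ℝ} {a b : ℝ} (hG : Ioo a b ∈ gaps E) {t : ℝ} (ht : t ∈ Ioo a b) :
    t ∉ E := by
  obtain ⟨⟨s, -, hs⟩, -⟩ := hG
  rw [hs] at ht
  exact connectedComponentIn_subset _ _ ht

lemma exists_intervalComponent {E : Set ℝ} {u v : ℝ} (huv : u < v) (h : Icc u v ⊆ E) :
    ∃ I ∈ intervalComponents E, Icc u v ⊆ I := by
  have hu : u ∈ Icc u v := left_mem_Icc.2 huv.le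
  have hsub := isPreconnected_Icc.subset_connectedComponentIn hu h
  refine ⟨_, ⟨⟨u, h hu, rfl⟩, fun hss => ?_⟩, hsub⟩
  exact huv.ne (hss (hsub hu) (hsub (right_mem_Icc.2 huv.le)))

lemma exists_Icc_of_intervalComponents {E : Set ℝ} (h : (intervalComponents E).Nonempty) :
    ∃ u v : ℝ, u < v ∧ Icc u v ⊆ E := by
  obtain ⟨_, ⟨⟨t, -, rfl⟩, hns⟩⟩ := h
  rw [not_subsingleton_iff] at hns
  obtain ⟨u, hu, v, hv, huv⟩ := hns.exists_lt
  exact ⟨u, v, huv, ((isPreconnected_connectedComponentIn).ordConnected.out hu hv).trans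
    (connectedComponentIn_subset _ _)⟩

/-- The Cantorval condition, with gaps and components replaced by points of the complement and
intervals contained in `E`. -/
lemma isCantorval_of {E : Set ℝ} (hE : IsCompact E)
    (hgap : ∃ p q t, p ∈ E ∧ q ∈ E ∧ t ∉ E ∧ p < t ∧ t < q)
    (hinterval : ∃ u v : ℝ, u < v ∧ Icc u v ⊆ E)
    (hR : ∀ a b, a < b → b ∈ E → (∀ t ∈ E, a < t → b ≤ t) → ∀ ε > 0,
      (∃ t, b < t ∧ t < b + ε ∧ t ∉ E) ∧ ∃ u v, b < u ∧ u < v ∧ v < b + ε ∧ Icc u v ⊆ E)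
    (hL : ∀ a b, a < b → a ∈ E → (∀ t ∈ E, t < b → t ≤ a) → ∀ ε > 0,
      (∃ t, a - ε < t ∧ t < a ∧ t ∉ E) ∧ ∃ u v, a - ε < u ∧ u < v ∧ v < a ∧ Icc u v ⊆ E) :
    IsCantorval E := by
  obtain ⟨p, q, t, hp, hq, ht, hpt, htq⟩ := hgap
  refine ⟨⟨p, hp⟩, hE, ⟨_, (gap_of_between hp hq ht hpt htq).2⟩, ?_, ?_⟩
  · obtain ⟨u, v, huv, h⟩ := hinterval
    obtain ⟨I, hI, -⟩ := exists_intervalComponent huv h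
    exact ⟨I, hI⟩
  intro G hG
  obtain ⟨a, b, hab, ha, hb, rfl⟩ := gap_eq_Ioo hE hG
  have hdisj := fun t (ht : t ∈ Ioo a b) => Ioo_disjoint_of_gap hG ht
  have hR' := hR a b hab hb
    (fun t htE hat => by by_contra! h; exact hdisj t ⟨hat, h⟩ htE)
  have hL' := hL a b hab ha
    (fun t htE htb => by by_contra! h; exact hdisj t ⟨h, htb⟩ htE)
  have hcenter : ∀ {c s ε : ℝ}, c - ε < s → s < c + ε → s ∈ Metric.ball c ε := by
    intro c s ε h1 h2
    rw [Metric.mem_ball, Real.dist_eq, abs_lt]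
    constructor <;> linarith
  rw [csInf_Ioo hab, csSup_Ioo hab]
  rintro c (rfl | rfl)
  · refine ⟨fun ε hε => ?_, fun ε hε => ?_⟩
    · obtain ⟨-, u, v, h1, h2, h3, h4⟩ := hL' ε hε
      obtain ⟨⟨s, hs1, hs2, hsE⟩, -⟩ := hL' (c - v) (by linarith)
      have hvE : v ∈ E := h4 (right_mem_Icc.2 h2.le)
      obtain ⟨hG1, hG2⟩ := gap_of_between hvE ha hsE (by linarith) hs2
      have hmem : s ∈ connectedComponentIn Eᶜ s := mem_connectedComponentIn hsE
      refine ⟨_, hG2, fun heq => ?_, s, hmem, hcenter (by linarith) (by linarith)⟩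
      rw [heq] at hmem
      linarith [hmem.1]
    · obtain ⟨-, u, v, h1, h2, h3, h4⟩ := hL' ε hε
      obtain ⟨I, hI, hsub⟩ := exists_intervalComponent h2 h4
      exact ⟨I, hI, u, hsub (left_mem_Icc.2 h2.le), hcenter h1 (by linarith),
        by simp only [mem_singleton_iff]; linarith⟩
  · refine ⟨fun ε hε => ?_, fun ε hε => ?_⟩
    · obtain ⟨-, u, v, h1, h2, h3, h4⟩ := hR' ε hε
      obtain ⟨⟨s, hs1, hs2, hsE⟩, -⟩ := hR' (u - c) (by linarith)
      have huE : u ∈ E := h4 (left_mem_Icc.2 h2.le)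
      obtain ⟨hG1, hG2⟩ := gap_of_between hb huE hsE hs1 (by linarith)
      have hmem : s ∈ connectedComponentIn Eᶜ s := mem_connectedComponentIn hsE
      refine ⟨_, hG2, fun heq => ?_, s, hmem, hcenter (by linarith) (by linarith)⟩
      rw [heq] at hmem
      linarith [hmem.2]
    · obtain ⟨-, u, v, h1, h2, h3, h4⟩ := hR' ε hε
      obtain ⟨I, hI, hsub⟩ := exists_intervalComponent h2 h4
      exact ⟨I, hI, u, hsub (left_mem_Icc.2 h2.le), hcenter (by linarith) (by linarith),
        by simp only [mem_singleton_iff]; linarith⟩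

/-! ### The four types exclude each other -/

lemma not_finite_of_Icc {E : Set ℝ} (h : ∃ u v : ℝ, u < v ∧ Icc u v ⊆ E) : ¬ E.Finite := by
  obtain ⟨u, v, huv, hsub⟩ := h
  exact fun hfin => Icc_infinite huv (hfin.subset hsub)

/-- The Cantor set being totally disconnected, no Cantor set contains an interval. -/
lemma not_isCantorSet_of_Icc {E : Set ℝ} (h : ∃ u v : ℝ, u < v ∧ Icc u v ⊆ E) :
    ¬ IsCantorSet E := by
  obtain ⟨u, v, huv, hsub⟩ := h
  rintro ⟨φ⟩
  let ψ : Icc u v → ℕ → Bool :=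
    fun y => cantorSetHomeomorphNatToBool (φ ⟨y, hsub y.2⟩)
  have hψ : Continuous ψ := cantorSetHomeomorphNatToBool.continuous.comp
    (φ.continuous.comp (continuous_subtype_val.subtype_mk _))
  have hinj : Function.Injective ψ := by
    intro y z hyz
    have := φ.injective (cantorSetHomeomorphNatToBool.injective hyz)
    exact Subtype.ext (congrArg (fun w : E => (w : ℝ)) this)
  have : PreconnectedSpace (Icc u v) := Subtype.preconnectedSpace isPreconnected_Icc
  have hss := (isPreconnected_range hψ).subsingleton
  have heq := hinj (hss (mem_range_self ⟨u, left_mem_Icc.2 huv.le⟩)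
    (mem_range_self ⟨v, right_mem_Icc.2 huv.le⟩))
  exact huv.ne (congrArg Subtype.val heq)

lemma IsMultiInterval.exists_Icc {E : Set ℝ} (h : IsMultiInterval E) :
    ∃ u v : ℝ, u < v ∧ Icc u v ⊆ E := by
  obtain ⟨S, ⟨p, hp⟩, hlt, rfl⟩ := h
  exact ⟨p.1, p.2, hlt p hp, subset_biUnion_of_mem (u := fun p : ℝ × ℝ => Icc p.1 p.2) hp⟩

lemma IsCantorval.exists_Icc {E : Set ℝ} (h : IsCantorval E) :
    ∃ u v : ℝ, u < v ∧ Icc u v ⊆ E :=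
  exists_Icc_of_intervalComponents h.2.2.2.1

lemma IsCantorSet.not_finite {E : Set ℝ} (h : IsCantorSet E) : ¬ E.Finite := by
  obtain ⟨φ⟩ := h
  intro hfin
  have : Finite E := hfin
  have : Finite (ℕ → Bool) :=
    Finite.of_equiv E (φ.trans cantorSetHomeomorphNatToBool).toEquiv
  exact _root_.not_finite (ℕ → Bool)

/-- The right endpoint of a gap of a multi-interval is the left endpoint of one of its intervals,
so no other gap comes near. -/
lemma IsCantorval.not_isMultiInterval {E : Set ℝ} (h : IsCantorval E) : ¬ IsMultiInterval E := by
  obtain ⟨-, hE, ⟨G, hG⟩, -, hacc⟩ := h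
  rintro ⟨S, -, hlt, hES⟩
  obtain ⟨a, b, hab, ha, hb, rfl⟩ := gap_eq_Ioo hE hG
  have hdisj := fun t (ht : t ∈ Ioo a b) => Ioo_disjoint_of_gap hG ht
  have hsubE : ∀ p ∈ S, Icc p.1 p.2 ⊆ E := by
    intro p hp
    rw [hES]
    exact subset_biUnion_of_mem (u := fun p : ℝ × ℝ => Icc p.1 p.2) (show p ∈ (S : Set _) from hp)
  have hb' := hb
  rw [hES] at hb'
  simp only [mem_iUnion, exists_prop] at hb'
  obtain ⟨p, hp, hpb⟩ := hb'
  have hbp : p.1 = b := by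
    refine le_antisymm hpb.1 ?_
    by_contra! hlt'
    have h1 : max p.1 ((a + b) / 2) < b := max_lt hlt' (by linarith)
    have h2 := le_max_left p.1 ((a + b) / 2)
    have h3 := le_max_right p.1 ((a + b) / 2)
    exact hdisj _ ⟨by linarith, h1⟩ (hsubE p hp ⟨h2, h1.le.trans hpb.2⟩)
  have hp12 := hlt p hp
  obtain ⟨G', hG', hne, s, hs, hsb⟩ := (hacc _ hG b (by rw [csSup_Ioo hab]; simp)).1
    (min (p.2 - b) (b - a)) (lt_min (by linarith) (by linarith))
  rw [Metric.mem_ball, Real.dist_eq, lt_min_iff, abs_lt, abs_lt] at hsb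
  obtain ⟨⟨t, ht, rfl⟩, -⟩ := hG'
  have hsE : s ∉ E := connectedComponentIn_subset _ _ hs
  have hsG : s ∈ Ioo a b := by
    refine ⟨by linarith [hsb.2.1], ?_⟩
    by_contra! hbs
    exact hsE (hsubE p hp ⟨by linarith, by linarith [hsb.1.2]⟩)
  obtain ⟨⟨t', ht', hG'eq⟩, -⟩ := hG
  apply hne
  rw [hG'eq] at hsG ⊢
  rw [connectedComponentIn_eq hs, connectedComponentIn_eq hsG]

/-! ### Reduction to positive terms -/

/-- Replacing `x` by `|x|` translates the achievement set: toggling membership of the negative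
terms turns a subsum of `x` into one of `|x|`, up to the sum of the negative terms. -/
lemma mem_achievementSet_iff {x : ℕ → ℝ} (hsum : Summable fun n => |x n|) (y : ℝ) :
    y ∈ achievementSet x ↔
      y - ∑' n, {n | 1 ≤ n ∧ x n < 0}.indicator x n ∈
        subsums (fun n => |x n|) {n | 1 ≤ n ∧ x n ≠ 0} := by
  have hx : Summable x := hsum.of_abs
  set N : Set ℕ := {n | 1 ≤ n ∧ x n < 0} with hN
  constructor
  · rintro ⟨A, hA, hAy⟩
    refine ⟨{n | (n ∈ A ∧ 0 < x n) ∨ (n ∉ A ∧ n ∈ N)}, ?_, ?_⟩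
    · rintro n (⟨h1, h2⟩ | ⟨-, h1, h2⟩)
      · exact ⟨hA h1, h2.ne'⟩
      · exact ⟨h1, h2.ne⟩
    · have hAy' : ∑' n, A.indicator x n = y := by
        rw [← hAy.tsum_eq, tsum_subtype]
      rw [← hAy', ← (hx.indicator A).tsum_sub (hx.indicator N)]
      refine tsum_congr fun n => ?_
      by_cases hnA : n ∈ A
      · have h1 : 1 ≤ n := hA hnA
        rcases lt_trichotomy (x n) 0 with h | h | h
        · simp [hnA, hN, h, h1, not_lt.2 h.le]
        · simp [hnA, hN, h]
        · simp [hnA, hN, h, abs_of_pos h, not_lt.2 h.le]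
      · by_cases hnN : n ∈ N
        · simp [hnA, hnN, abs_of_neg hnN.2]
        · simp [hnA, hnN]
  · rintro ⟨B, hB, hBy⟩
    refine ⟨{n | (n ∈ B ∧ 0 < x n) ∨ (n ∉ B ∧ n ∈ N)}, ?_, ?_⟩
    · rintro n (⟨h1, h2⟩ | ⟨-, h1, h2⟩)
      · exact (hB h1).1
      · exact h1
    · have h : y = ∑' n, {n | (n ∈ B ∧ 0 < x n) ∨ (n ∉ B ∧ n ∈ N)}.indicator x n := by
        rw [← sub_eq_iff_eq_add.1 hBy.symm |>.symm,
          ← (hsum.indicator B).tsum_add (hx.indicator N)]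
        refine tsum_congr fun n => ?_
        by_cases hnB : n ∈ B
        · have h1 : 1 ≤ n := (hB hnB).1
          rcases lt_trichotomy (x n) 0 with h | h | h
          · simp [hnB, hN, h, h1, not_lt.2 h.le, abs_of_neg h]
          · simp [hnB, hN, h]
          · simp [hnB, hN, h, abs_of_pos h, not_lt.2 h.le]
        · by_cases hnN : n ∈ N
          · simp [hnB, hnN]
          · simp [hnB, hnN]
      rw [h]
      exact hasSum_subtype_iff_indicator.2 (hx.indicator _).hasSum

lemma achievementSet_eq_image {x : ℕ → ℝ} {c : ℝ} {S : Set ℕ} {z : ℕ → ℝ}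
    (h : ∀ y, y ∈ achievementSet x ↔ y - c ∈ subsums z S) :
    achievementSet x = {c} + subsums z S := by
  ext y
  rw [h, singleton_add]
  constructor
  · exact fun hy => ⟨_, hy, by ring⟩
  · rintro ⟨w, hw, rfl⟩
    simpa using hw

/-- Every achievement set is of one of the four types.  The left endpoints of gaps are reduced to
the right ones by the symmetry of the set of subsums. -/
lemma achievementSet_cases {x : ℕ → ℝ} (hsum : Summable fun n => |x n|) :
    (achievementSet x).Finite ∨ IsMultiInterval (achievementSet x) ∨
      IsCantorSet (achievementSet x) ∨ IsCantorval (achievementSet x) := by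
  have hiff := mem_achievementSet_iff hsum
  set c : ℝ := ∑' n, {n | 1 ≤ n ∧ x n < 0}.indicator x n
  set S : Set ℕ := {n | 1 ≤ n ∧ x n ≠ 0} with hSdef
  set z : ℕ → ℝ := fun n => |x n| with hz
  have hnn : ∀ n, 0 ≤ z n := fun n => abs_nonneg _
  have hpos : ∀ n ∈ S, 0 < z n := fun n hn => abs_pos.2 hn.2
  have himg := achievementSet_eq_image hiff
  set E := achievementSet x
  by_cases hS : S.Finite
  · left
    rw [himg]
    exact (finite_singleton c).add (finite_subsums z hS)
  right
  have hS : S.Infinite := hS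
  by_cases hmulti : IsMultiInterval (subsums z S)
  · left
    rw [himg]
    exact hmulti.finite_add (finite_singleton c) (singleton_nonempty c)
  right
  have hcpt : IsCompact E := by
    rw [himg]
    exact isCompact_singleton.add (isCompact_subsums hsum hnn S)
  by_cases hinterval : ∃ u v : ℝ, u < v ∧ Icc u v ⊆ subsums z S
  · right
    set σ : ℝ := ∑' n, S.indicator z n
    have hsymm : ∀ y, y ∈ E ↔ σ + c - y ∈ subsums z S := by
      intro y
      rw [hiff]
      constructor <;> intro h <;> have := sub_mem_subsums hsum h
      · convert this using 1; ring
      · convert this using 1; ring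
    refine isCantorval_of hcpt ?_ ?_ ?_ ?_
    · by_contra! hcon
      refine hmulti ?_
      have hσ : σ ∈ subsums z S := ⟨S, Subset.rfl, rfl⟩
      have h0 := zero_mem_subsums z S
      obtain ⟨n, hn⟩ := hS.nonempty
      have hσpos : 0 < σ := by
        have := tsum_indicator_mono hsum hnn (singleton_subset_iff.2 hn)
        rw [tsum_indicator_singleton] at this
        exact (hpos n hn).trans_le this
      have : subsums z S = Icc 0 σ := by
        refine Subset.antisymm
          (fun y hy => ⟨nonneg_of_mem_subsums hnn hy, le_of_mem_subsums hsum hnn hy⟩) ?_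
        intro t ht
        by_contra hts
        have ht0 : 0 < t := lt_of_le_of_ne ht.1 fun h => hts (h ▸ h0)
        have htσ : t < σ := lt_of_le_of_ne ht.2 fun h => hts (h ▸ hσ)
        have := hcon c (c + σ) (c + t) ((hiff _).2 (by simpa using h0))
          ((hiff _).2 (by simpa using hσ)) (fun h => hts (by simpa using (hiff _).1 h))
          (by linarith)
        linarith
      rw [this]
      exact isMultiInterval_Icc hσpos
    · obtain ⟨u, v, huv, hsub⟩ := hinterval
      refine ⟨c + u, c + v, by linarith, fun y hy => (hiff y).2 (hsub ?_)⟩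
      constructor <;> linarith [hy.1, hy.2]
    · intro a b hab hb hgap ε hε
      have hab' : a - c < b - c := by linarith
      have hgap' : ∀ t ∈ subsums z S, a - c < t → b - c ≤ t := by
        intro t ht hat
        have := hgap (t + c) ((hiff _).2 (by simpa using ht)) (by linarith)
        linarith
      constructor
      · obtain ⟨t, h1, h2, h3⟩ := gaps_near_right_endpoint hsum hnn hS hpos hmulti hab'
          hgap' hε
        exact ⟨t + c, by linarith, by linarith, fun h => h3 (by simpa using (hiff _).1 h)⟩
      · obtain ⟨u, v, h1, h2, h3, h4⟩ := intervals_near_right_endpoint hsum hnn hinterval hab'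
          ((hiff b).1 hb) hgap' hε
        refine ⟨u + c, v + c, by linarith, by linarith, by linarith,
          fun y hy => (hiff y).2 (h4 ?_)⟩
        constructor <;> linarith [hy.1, hy.2]
    · intro a b hab ha hgap ε hε
      have hab' : σ + c - b < σ + c - a := by linarith
      have hgap' : ∀ t ∈ subsums z S, σ + c - b < t → σ + c - a ≤ t := by
        intro t ht hat
        have := hgap (σ + c - t) ((hsymm _).2 (by simpa using ht)) (by linarith)
        linarith
      constructor
      · obtain ⟨t, h1, h2, h3⟩ := gaps_near_right_endpoint hsum hnn hS hpos hmulti hab'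
          hgap' hε
        exact ⟨σ + c - t, by linarith, by linarith,
          fun h => h3 (by simpa using (hsymm _).1 h)⟩
      · obtain ⟨u, v, h1, h2, h3, h4⟩ := intervals_near_right_endpoint hsum hnn hinterval hab'
          ((hsymm a).1 ha) hgap' hε
        refine ⟨σ + c - v, σ + c - u, by linarith, by linarith, by linarith,
          fun y hy => (hsymm y).2 (h4 ?_)⟩
        constructor <;> linarith [hy.1, hy.2]
  · left
    push Not at hinterval
    refine isCantorSet_of_perfect hcpt ⟨c, (hiff c).2 (by simpa using zero_mem_subsums z S)⟩ ?_ ?_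
    · intro y hy ε hε
      obtain ⟨w, hw, hne, hlt⟩ := subsums_perfect hsum hS hpos _ ((hiff y).1 hy) ε hε
      refine ⟨w + c, (hiff _).2 (by simpa using hw), fun h => hne (by linarith), ?_⟩
      rwa [show w + c - y = w - (y - c) by ring]
    · intro u v huv
      -- `hinterval` only concerns closed intervals, so it is applied to the middle third of `(u, v)`
      obtain ⟨t, ht, htS⟩ := not_subset.1
        (hinterval (u - c + (v - u) / 3) (v - c - (v - u) / 3) (by linarith))
      exact ⟨t + c, by linarith [ht.1], by linarith [ht.2],
        fun h => htS (by simpa using (hiff _).1 h)⟩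

/-- The Guthrie–Nymann Classification Theorem: the achievement set of an absolutely
convergent series is of exactly one of four types: a finite set, a multi-interval set,
a Cantor set, or a Cantorval. -/
theorem guthrie_nymann_classification (x : ℕ → ℝ)
    (hsum : Summable fun n => |x n|) :
    ((achievementSet x).Finite ∧ ¬ IsMultiInterval (achievementSet x) ∧
        ¬ IsCantorSet (achievementSet x) ∧ ¬ IsCantorval (achievementSet x)) ∨
    (IsMultiInterval (achievementSet x) ∧ ¬ (achievementSet x).Finite ∧
        ¬ IsCantorSet (achievementSet x) ∧ ¬ IsCantorval (achievementSet x)) ∨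
    (IsCantorSet (achievementSet x) ∧ ¬ (achievementSet x).Finite ∧
        ¬ IsMultiInterval (achievementSet x) ∧ ¬ IsCantorval (achievementSet x)) ∨
    (IsCantorval (achievementSet x) ∧ ¬ (achievementSet x).Finite ∧
        ¬ IsMultiInterval (achievementSet x) ∧ ¬ IsCantorSet (achievementSet x)) := by
  rcases achievementSet_cases hsum with h | h | h | h
  · exact Or.inl ⟨h, fun h' => not_finite_of_Icc h'.exists_Icc h, fun h' => h'.not_finite h,
      fun h' => not_finite_of_Icc h'.exists_Icc h⟩
  · exact Or.inr (Or.inl ⟨h, not_finite_of_Icc h.exists_Icc, not_isCantorSet_of_Icc h.exists_Icc,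
      fun h' => h'.not_isMultiInterval h⟩)
  · exact Or.inr (Or.inr (Or.inl ⟨h, h.not_finite,
      fun h' => not_isCantorSet_of_Icc h'.exists_Icc h,
      fun h' => not_isCantorSet_of_Icc h'.exists_Icc h⟩))
  · exact Or.inr (Or.inr (Or.inr ⟨h, not_finite_of_Icc h.exists_Icc, h.not_isMultiInterval,
      not_isCantorSet_of_Icc h.exists_Icc⟩))
end

section
/- (Kakeya) Let x : ℕ → ℝ be a sequence of positive terms with ∑ₙ x(n) < ∞. If the set K(x) = { n : x(n) > r(n) } has finite complement in ℕ, then the achievement set E(x) is a Cantor set. -/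
/-! The set `E(x)` is nonempty, compact, has no isolated points and has empty interior; any such
subset of `ℝ` is homeomorphic to the Cantor space `ℕ → Bool`, hence to the ternary Cantor set.

*Topological part* (`nonempty_homeomorph_of_isThin`). A set of this kind can be cut at a point
outside it lying in the middle half of its convex hull. Both pieces are of the same kind, and
their diameters are at most `3/4` of the original one. Iterating gives a disjoint Cantor scheme
with vanishing diameter, whose induced map is a continuous bijection from `ℕ → Bool`.

*Arithmetical part*. `E(x)` is the image of `ℕ → Bool` under the continuous map
`b ↦ ∑ₖ b(k) x(k+1)`, so it is compact; flipping a far digit changes the sum by a small nonzero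
amount, so there are no isolated points. For the interior, let `Tₙ` be the set of subsums of
`x(n+1), x(n+2), …`. Then `Tₙ = Tₙ₊₁ ∪ (x(n+1) + Tₙ₊₁)` and `Tₙ ⊆ [0, r(n)]`. If `n + 1 ∈ K(x)`,
the two pieces are separated by a gap, so an interval contained in `Tₙ` is contained in a
translate of `Tₙ₊₁`. Hence if all indices beyond `N` are in `K(x)`, an interval in `T_N` has length
at most `r(m)` for every `m ≥ N`, that is, length zero. Finally, a union of two closed sets with
empty interior has empty interior, which carries the conclusion down from `T_N` to `T₀ = E(x)`. -/

open Set Filter Topology MeasureTheory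
open scoped Pointwise

namespace KakeyaCantor

/-! ### Compact perfect sets of reals with empty interior -/

/-- Nonempty compact subsets of `ℝ` without isolated points and with empty interior, the last
condition being expressed through points of the complement. -/
structure IsThin (S : Set ℝ) : Prop where
  compact : IsCompact S
  nonempty : S.Nonempty
  preperfect : Preperfect S
  exists_notMem : ∀ a b, a < b → ∃ c, a < c ∧ c < b ∧ c ∉ S

lemma IsThin.csInf_lt_csSup {S : Set ℝ} (h : IsThin S) : sInf S < sSup S := by
  obtain ⟨p, hp⟩ := h.nonempty
  have hacc := h.preperfect p hp
  rw [accPt_iff_nhds] at hacc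
  obtain ⟨q, ⟨-, hq⟩, hne⟩ := hacc univ univ_mem
  have hb := h.compact.bddBelow
  have ha := h.compact.bddAbove
  rcases lt_or_gt_of_ne hne with hlt | hlt
  · exact (csInf_le hb hq).trans_lt (hlt.trans_le (le_csSup ha hp))
  · exact (csInf_le hb hp).trans_lt (hlt.trans_le (le_csSup ha hq))

/-- A thin set can be cut into two thin pieces at a point in the middle half of its hull. -/
lemma IsThin.exists_cut {S : Set ℝ} (h : IsThin S) : ∃ c : ℝ,
    IsThin (Iio c ∩ S) ∧ IsThin (Ioi c ∩ S) ∧ c ∉ S ∧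
    Metric.diam (Iio c ∩ S) ≤ 3 / 4 * Metric.diam S ∧
    Metric.diam (Ioi c ∩ S) ≤ 3 / 4 * Metric.diam S := by
  have hlt := h.csInf_lt_csSup
  have hdiam := Real.diam_eq h.compact.isBounded
  have hb := h.compact.bddBelow
  have ha := h.compact.bddAbove
  have hinf := h.compact.sInf_mem h.nonempty
  have hsup := h.compact.sSup_mem h.nonempty
  set m := sInf S
  set M := sSup S
  obtain ⟨c, hc1, hc2, hcS⟩ := h.exists_notMem (m + (M - m) / 4) (M - (M - m) / 4) (by linarith)
  have e1 : Iio c ∩ S = Iic c ∩ S := by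
    ext t
    simp only [mem_inter_iff, mem_Iio, mem_Iic, and_congr_left_iff]
    intro ht
    exact ⟨le_of_lt, fun h' => lt_of_le_of_ne h' (fun e => hcS (e ▸ ht))⟩
  have e2 : Ioi c ∩ S = Ici c ∩ S := by
    ext t
    simp only [mem_inter_iff, mem_Ioi, mem_Ici, and_congr_left_iff]
    intro ht
    exact ⟨le_of_lt, fun h' => lt_of_le_of_ne h' (fun e => hcS (e ▸ ht))⟩
  refine ⟨c, ⟨?_, ⟨m, ?_, hinf⟩, h.preperfect.open_inter isOpen_Iio, ?_⟩,
    ⟨?_, ⟨M, ?_, hsup⟩, h.preperfect.open_inter isOpen_Ioi, ?_⟩, hcS, ?_, ?_⟩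
  · rw [e1]; exact h.compact.inter_left isClosed_Iic
  · simp only [mem_Iio]; linarith
  · intro a b hab
    obtain ⟨d, h1, h2, h3⟩ := h.exists_notMem a b hab
    exact ⟨d, h1, h2, fun hd => h3 hd.2⟩
  · rw [e2]; exact h.compact.inter_left isClosed_Ici
  · simp only [mem_Ioi]; linarith
  · intro a b hab
    obtain ⟨d, h1, h2, h3⟩ := h.exists_notMem a b hab
    exact ⟨d, h1, h2, fun hd => h3 hd.2⟩
  · refine Metric.diam_le_of_forall_dist_le (by linarith) ?_
    rintro p ⟨hp, hpS⟩ q ⟨hq, hqS⟩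
    have := csInf_le hb hpS
    have := csInf_le hb hqS
    simp only [mem_Iio] at hp hq
    rw [Real.dist_eq, abs_le]
    constructor <;> linarith
  · refine Metric.diam_le_of_forall_dist_le (by linarith) ?_
    rintro p ⟨hp, hpS⟩ q ⟨hq, hqS⟩
    have := le_csSup ha hpS
    have := le_csSup ha hqS
    simp only [mem_Ioi] at hp hq
    rw [Real.dist_eq, abs_le]
    constructor <;> linarith

open Classical in
/-- A cutting point as provided by `IsThin.exists_cut`; `0` for sets that are not thin. -/
noncomputable def cut (S : Set ℝ) : ℝ := if h : IsThin S then h.exists_cut.choose else 0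

lemma IsThin.cut_spec {S : Set ℝ} (h : IsThin S) :
    IsThin (Iio (cut S) ∩ S) ∧ IsThin (Ioi (cut S) ∩ S) ∧ cut S ∉ S ∧
    Metric.diam (Iio (cut S) ∩ S) ≤ 3 / 4 * Metric.diam S ∧
    Metric.diam (Ioi (cut S) ∩ S) ≤ 3 / 4 * Metric.diam S := by
  have := h.exists_cut.choose_spec
  rwa [cut, dif_pos h]

/-- The Cantor scheme obtained by cutting `S` repeatedly; `false` selects the left piece and
`true` the right piece. -/
noncomputable def scheme (S : Set ℝ) : List Bool → Set ℝ
  | [] => S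
  | false :: l => Iio (cut (scheme S l)) ∩ scheme S l
  | true :: l => Ioi (cut (scheme S l)) ∩ scheme S l

lemma scheme_isThin {S : Set ℝ} (h : IsThin S) : ∀ l, IsThin (scheme S l)
  | [] => h
  | false :: l => (scheme_isThin h l).cut_spec.1
  | true :: l => (scheme_isThin h l).cut_spec.2.1

lemma diam_scheme_le {S : Set ℝ} (h : IsThin S) :
    ∀ l, Metric.diam (scheme S l) ≤ (3 / 4) ^ l.length * Metric.diam S
  | [] => by simp [scheme]
  | false :: l => by
    have h1 := (scheme_isThin h l).cut_spec.2.2.2.1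
    have h2 := diam_scheme_le h l
    simp only [scheme, List.length_cons, pow_succ]
    linarith
  | true :: l => by
    have h1 := (scheme_isThin h l).cut_spec.2.2.2.2
    have h2 := diam_scheme_le h l
    simp only [scheme, List.length_cons, pow_succ]
    linarith

lemma scheme_antitone (S : Set ℝ) : CantorScheme.Antitone (scheme S) := by
  rintro l (_ | _) <;> exact inter_subset_right

lemma scheme_disjoint (S : Set ℝ) : CantorScheme.Disjoint (scheme S) := by
  rintro l (_ | _) (_ | _) hne
  · exact absurd rfl hne
  · rw [Set.disjoint_left]
    rintro t ⟨h1, -⟩ ⟨h2, -⟩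
    exact lt_asymm (mem_Iio.1 h1) (mem_Ioi.1 h2)
  · rw [Set.disjoint_left]
    rintro t ⟨h1, -⟩ ⟨h2, -⟩
    exact lt_asymm (mem_Ioi.1 h1) (mem_Iio.1 h2)
  · exact absurd rfl hne

lemma scheme_vanishingDiam {S : Set ℝ} (h : IsThin S) :
    CantorScheme.VanishingDiam (scheme S) := by
  intro b
  have hlim : Tendsto (fun n : ℕ => ENNReal.ofReal ((3 / 4 : ℝ) ^ n * Metric.diam S)) atTop
      (𝓝 0) := by
    have := (tendsto_pow_atTop_nhds_zero_of_lt_one (r := (3 / 4 : ℝ)) (by norm_num)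
      (by norm_num)).mul_const (Metric.diam S)
    simpa using ENNReal.tendsto_ofReal this
  refine tendsto_of_tendsto_of_tendsto_of_le_of_le tendsto_const_nhds hlim
    (fun _ => zero_le) (fun n => ?_)
  have h1 := diam_scheme_le h (PiNat.res b n)
  rw [PiNat.res_length] at h1
  rw [← ENNReal.ofReal_toReal (scheme_isThin h (PiNat.res b n)).compact.isBounded.ediam_ne_top]
  exact ENNReal.ofReal_le_ofReal h1

open Classical in
/-- The first `n` digits, latest first, of the itinerary of `t`: each digit records the side of
the corresponding cut on which `t` lies. Latest-first order agrees with `PiNat.res`. -/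
noncomputable def itineraryList (S : Set ℝ) (t : ℝ) : ℕ → List Bool
  | 0 => []
  | n + 1 => decide (cut (scheme S (itineraryList S t n)) < t) :: itineraryList S t n

lemma mem_scheme_itineraryList {S : Set ℝ} (h : IsThin S) {t : ℝ} (ht : t ∈ S) (n : ℕ) :
    t ∈ scheme S (itineraryList S t n) := by
  induction n with
  | zero => exact ht
  | succ n ih =>
    have hc := (scheme_isThin h (itineraryList S t n)).cut_spec.2.2.1
    rw [itineraryList]
    by_cases hlt : cut (scheme S (itineraryList S t n)) < t
    · rw [decide_eq_true hlt]
      exact ⟨hlt, ih⟩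
    · rw [decide_eq_false hlt]
      exact ⟨lt_of_le_of_ne (not_lt.1 hlt) (fun e => hc (e ▸ ih)), ih⟩

lemma exists_branch {S : Set ℝ} (h : IsThin S) {t : ℝ} (ht : t ∈ S) :
    ∃ b : ℕ → Bool, ∀ n, t ∈ scheme S (PiNat.res b n) := by
  classical
  refine ⟨fun n => decide (cut (scheme S (itineraryList S t n)) < t), fun n => ?_⟩
  convert mem_scheme_itineraryList h ht n
  induction n with
  | zero => rfl
  | succ n ih => rw [PiNat.res_succ, ih, itineraryList]

theorem nonempty_homeomorph_of_isThin {S : Set ℝ} (h : IsThin S) :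
    Nonempty ((ℕ → Bool) ≃ₜ S) := by
  have hvan := scheme_vanishingDiam h
  have htot : (CantorScheme.inducedMap (scheme S)).1 = univ :=
    ((scheme_antitone S).closureAntitone
      (fun l => (scheme_isThin h l).compact.isClosed)).map_of_vanishingDiam hvan
      (fun l => (scheme_isThin h l).nonempty)
  have hdom : ∀ b, b ∈ (CantorScheme.inducedMap (scheme S)).1 := fun b => htot ▸ mem_univ b
  let f : (ℕ → Bool) → S := fun b =>
    ⟨(CantorScheme.inducedMap (scheme S)).2 ⟨b, hdom b⟩, CantorScheme.map_mem ⟨b, hdom b⟩ 0⟩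
  have hf : Continuous f :=
    (hvan.map_continuous.comp (continuous_id.subtype_mk hdom)).subtype_mk _
  have hinj : Function.Injective f := by
    intro b b' hbb
    have hval : (f b : ℝ) = f b' := congrArg Subtype.val hbb
    have heq : (⟨b, hdom b⟩ : (CantorScheme.inducedMap (scheme S)).1) = ⟨b', hdom b'⟩ :=
      (scheme_disjoint S).map_injective hval
    exact congrArg Subtype.val heq
  have hsurj : Function.Surjective f := by
    rintro ⟨t, ht⟩
    obtain ⟨b, hb⟩ := exists_branch h ht
    refine ⟨b, Subtype.ext ?_⟩
    refine eq_of_forall_dist_le fun ε hε => ?_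
    obtain ⟨n, hn⟩ := hvan.dist_lt ε hε b
    exact (hn _ (CantorScheme.map_mem ⟨b, hdom b⟩ n) _ (hb n)).le
  exact ⟨Continuous.homeoOfEquivCompactToT2 (f := Equiv.ofBijective f ⟨hinj, hsurj⟩) hf⟩

/-! ### Subsums -/

/-- The subsum of `∑ y k` selected by the digits `b`. -/
noncomputable def subsum (y : ℕ → ℝ) (b : ℕ → Bool) : ℝ := ∑' k, if b k then y k else 0

lemma summable_digits {y : ℕ → ℝ} (h0 : ∀ k, 0 < y k) (hy : Summable y) (b : ℕ → Bool) :
    Summable (fun k => if b k then y k else 0) :=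
  hy.of_nonneg_of_le (fun k => by split_ifs <;> simp [(h0 k).le])
    (fun k => by split_ifs <;> simp [(h0 k).le])

lemma continuous_subsum {y : ℕ → ℝ} (h0 : ∀ k, 0 < y k) (hy : Summable y) :
    Continuous (subsum y) := by
  refine continuous_tsum (u := y) (fun k => ?_) hy (fun k b => ?_)
  · exact (continuous_of_discreteTopology (f := fun c : Bool => if c then y k else 0)).comp
      (continuous_apply k)
  · split_ifs <;> simp [abs_of_pos (h0 k), (h0 k).le]

lemma subsum_mem_Icc {y : ℕ → ℝ} (h0 : ∀ k, 0 < y k) (hy : Summable y) (b : ℕ → Bool) :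
    subsum y b ∈ Icc 0 (∑' k, y k) :=
  ⟨tsum_nonneg (fun k => by split_ifs <;> simp [(h0 k).le]),
    (summable_digits h0 hy b).tsum_le_tsum (fun k => by split_ifs <;> simp [(h0 k).le]) hy⟩

lemma subsum_succ {y : ℕ → ℝ} (h0 : ∀ k, 0 < y k) (hy : Summable y) (b : ℕ → Bool) :
    subsum y b = (if b 0 then y 0 else 0) + subsum (fun k => y (k + 1)) (fun k => b (k + 1)) :=
  (summable_digits h0 hy b).tsum_eq_zero_add

lemma range_subsum {y : ℕ → ℝ} (h0 : ∀ k, 0 < y k) (hy : Summable y) :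
    range (subsum y) = range (subsum fun k => y (k + 1)) ∪
      image (fun t => y 0 + t) (range (subsum fun k => y (k + 1))) := by
  ext t
  constructor
  · rintro ⟨b, rfl⟩
    rw [subsum_succ h0 hy]
    cases hb : b 0
    · left; exact ⟨_, by simp; rfl⟩
    · right; exact ⟨_, ⟨_, rfl⟩, by simp; rfl⟩
  · rintro (⟨b, rfl⟩ | ⟨_, ⟨b, rfl⟩, rfl⟩)
    · exact ⟨fun k => Nat.casesOn k false b, by rw [subsum_succ h0 hy]; simp⟩
    · exact ⟨fun k => Nat.casesOn k true b, by rw [subsum_succ h0 hy]; simp⟩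

lemma abs_subsum_update_sub {y : ℕ → ℝ} (h0 : ∀ k, 0 < y k) (hy : Summable y) (b : ℕ → Bool)
    (n : ℕ) : |subsum y (Function.update b n (!b n)) - subsum y b| = y n := by
  rw [subsum, subsum, ← (summable_digits h0 hy _).tsum_sub (summable_digits h0 hy b),
    tsum_eq_single n]
  · cases hb : b n <;> simp [abs_of_pos (h0 n)]
  · intro k hk
    simp [Function.update_of_ne hk]

lemma preperfect_range_subsum {y : ℕ → ℝ} (h0 : ∀ k, 0 < y k) (hy : Summable y) :
    Preperfect (range (subsum y)) := by
  rintro _ ⟨b, rfl⟩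
  rw [accPt_iff_nhds]
  intro U hU
  obtain ⟨ε, hε, hball⟩ := Metric.mem_nhds_iff.1 hU
  obtain ⟨n, hn⟩ := (hy.tendsto_atTop_zero.eventually (gt_mem_nhds hε)).exists
  have habs := abs_subsum_update_sub h0 hy b n
  refine ⟨_, ⟨hball ?_, mem_range_self (Function.update b n (!b n))⟩, fun e => ?_⟩
  · rw [Metric.mem_ball, Real.dist_eq, habs]
    exact hn
  · rw [e, sub_self, abs_zero] at habs
    exact (h0 n).ne habs

/-! ### Tails and the Kakeya conditions -/

/-- The `n`-th tail of `x`, starting with `x (n + 1)`. -/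
def tail (x : ℕ → ℝ) (n k : ℕ) : ℝ := x (n + 1 + k)

lemma tail_shift (x : ℕ → ℝ) (n : ℕ) : (fun k => tail x n (k + 1)) = tail x (n + 1) := by
  funext k
  simp only [tail]
  congr 1
  ring

lemma tail_pos {x : ℕ → ℝ} (hpos : ∀ n, 1 ≤ n → 0 < x n) (n k : ℕ) : 0 < tail x n k :=
  hpos _ (by omega)

lemma summable_tail {x : ℕ → ℝ} (hsum : Summable x) (n : ℕ) : Summable (tail x n) :=
  hsum.comp_injective (add_right_injective (n + 1))

lemma remainder_eq (x : ℕ → ℝ) (n : ℕ) : remainder x n = ∑' k, tail x n k := by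
  let e : ℕ ≃ {i : ℕ // n < i} :=
    { toFun := fun k => ⟨n + 1 + k, by omega⟩
      invFun := fun i => i - (n + 1)
      left_inv := fun k => by simp
      right_inv := fun i => Subtype.ext (by have := i.2; simp only; omega) }
  exact (e.tsum_eq (fun i : {i : ℕ // n < i} => x i)).symm

lemma tendsto_remainder (x : ℕ → ℝ) : Tendsto (remainder x) atTop (𝓝 0) := by
  have h := (tendsto_sum_nat_add x).comp (tendsto_add_atTop_nat 1)
  refine h.congr fun n => ?_
  rw [remainder_eq]
  exact tsum_congr fun k => by simp only [tail]; congr 1; ring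

lemma range_subsum_tail {x : ℕ → ℝ} (hpos : ∀ n, 1 ≤ n → 0 < x n) (hsum : Summable x) (n : ℕ) :
    range (subsum (tail x n)) = range (subsum (tail x (n + 1))) ∪
      image (fun t => x (n + 1) + t) (range (subsum (tail x (n + 1)))) := by
  rw [range_subsum (tail_pos hpos n) (summable_tail hsum n), tail_shift]
  rfl

/-- Under the Kakeya conditions beyond `n`, an interval contained in the set of subsums of the
`n`-th tail lies in one piece at every level, so its length is bounded by every later remainder. -/
lemma length_le_remainder {x : ℕ → ℝ} (hpos : ∀ n, 1 ≤ n → 0 < x n) (hsum : Summable x) (m : ℕ) :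
    ∀ n, (∀ i, n < i → remainder x i < x i) → ∀ a b, a ≤ b →
      Icc a b ⊆ range (subsum (tail x n)) → b - a ≤ remainder x (n + m) := by
  have hIcc : ∀ n t, t ∈ range (subsum (tail x n)) → t ∈ Icc 0 (remainder x n) := by
    rintro n _ ⟨b, rfl⟩
    rw [remainder_eq]
    exact subsum_mem_Icc (tail_pos hpos n) (summable_tail hsum n) b
  induction m with
  | zero =>
    intro n _ a b hab hsub
    have ha := hIcc n a (hsub (left_mem_Icc.2 hab))
    have hb := hIcc n b (hsub (right_mem_Icc.2 hab))
    have := ha.1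
    have := hb.2
    rw [add_zero]
    linarith
  | succ m ih =>
    intro n hK a b hab hsub
    have hK' : ∀ i, n + 1 < i → remainder x i < x i := fun i hi => hK i (by omega)
    have hgap := hK (n + 1) (by omega)
    rw [range_subsum_tail hpos hsum n] at hsub
    rw [show n + (m + 1) = n + 1 + m by ring]
    -- `g` lies in the gap between the two pieces.
    obtain ⟨g, hg1, hg2⟩ := exists_between hgap
    have hleft : ∀ t ∈ Icc a b, t ≤ g → t ∈ range (subsum (tail x (n + 1))) := by
      intro t ht htg
      rcases hsub ht with h | ⟨s, hs, rfl⟩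
      · exact h
      · have := (hIcc _ s hs).1
        simp only at htg
        linarith
    have hright : ∀ t ∈ Icc a b, g ≤ t → t - x (n + 1) ∈ range (subsum (tail x (n + 1))) := by
      intro t ht htg
      rcases hsub ht with h | ⟨s, hs, rfl⟩
      · have := (hIcc _ t h).2
        linarith
      · simpa using hs
    rcases lt_or_ge b g with hbg | hbg
    · exact ih (n + 1) hK' a b hab fun t ht => hleft t ht (ht.2.trans hbg.le)
    · rcases lt_or_ge g a with hga | hga
      · have := ih (n + 1) hK' (a - x (n + 1)) (b - x (n + 1)) (by linarith) fun t ht => by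
          have := hright (t + x (n + 1)) ⟨by linarith [ht.1], by linarith [ht.2]⟩
            (by linarith [ht.1])
          simpa using this
        linarith
      · have := (hIcc _ _ (hleft g ⟨hga, hbg⟩ le_rfl)).2
        linarith

lemma interior_eq_empty_of_kakeya {x : ℕ → ℝ} (hpos : ∀ n, 1 ≤ n → 0 < x n) (hsum : Summable x)
    (n : ℕ) (hK : ∀ i, n < i → remainder x i < x i) :
    interior (range (subsum (tail x n))) = ∅ := by
  rw [eq_empty_iff_forall_notMem]
  intro t ht
  obtain ⟨ε, hε, hball⟩ := Metric.mem_nhds_iff.1 (mem_interior_iff_mem_nhds.1 ht)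
  have hle : ∀ m, ε / 2 ≤ remainder x (n + m) := fun m => by
    have := length_le_remainder hpos hsum m n hK t (t + ε / 2) (by linarith) fun s hs => hball (by
      rw [Metric.mem_ball, Real.dist_eq, abs_lt]
      constructor <;> linarith [hs.1, hs.2])
    linarith
  have hlim : Tendsto (fun m => remainder x (n + m)) atTop (𝓝 0) := by
    have := (tendsto_remainder x).comp (tendsto_add_atTop_nat n)
    refine this.congr fun m => ?_
    simp [add_comm]
  linarith [ge_of_tendsto' hlim hle]

lemma isClosed_range_subsum {x : ℕ → ℝ} (hpos : ∀ n, 1 ≤ n → 0 < x n) (hsum : Summable x)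
    (n : ℕ) : IsClosed (range (subsum (tail x n))) :=
  (isCompact_range (continuous_subsum (tail_pos hpos n) (summable_tail hsum n))).isClosed

lemma interior_eq_empty_step {x : ℕ → ℝ} (hpos : ∀ n, 1 ≤ n → 0 < x n) (hsum : Summable x)
    (n : ℕ) (h : interior (range (subsum (tail x (n + 1)))) = ∅) :
    interior (range (subsum (tail x n))) = ∅ := by
  rw [range_subsum_tail hpos hsum n, interior_union_isClosed_of_interior_empty
    (isClosed_range_subsum hpos hsum (n + 1)), h]
  have := (Homeomorph.addLeft (x (n + 1))).image_interior (range (subsum (tail x (n + 1))))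
  rw [h, image_empty] at this
  exact this.symm

lemma achievementSet_eq {x : ℕ → ℝ} (hpos : ∀ n, 1 ≤ n → 0 < x n) (hsum : Summable x) :
    achievementSet x = range (subsum (tail x 0)) := by
  classical
  have hshift : ∀ (f : ℕ → ℝ) (s : ℝ), f 0 = 0 → (HasSum f s ↔ HasSum (fun k => f (k + 1)) s) := by
    intro f s hf
    have := hasSum_nat_add_iff' (f := f) (g := s) 1
    simpa [hf] using this.symm
  ext s
  constructor
  · rintro ⟨A, hA, hs⟩
    have h0 : 0 ∉ A := fun h => absurd (hA h) (by simp)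
    have hs' : HasSum (A.indicator x) s := hasSum_subtype_iff_indicator.1 hs
    rw [hshift _ _ (by simp [h0])] at hs'
    refine ⟨fun k => decide (k + 1 ∈ A), ?_⟩
    rw [subsum, ← hs'.tsum_eq]
    refine tsum_congr fun k => ?_
    simp [tail, indicator_apply, add_comm]
  · rintro ⟨b, rfl⟩
    refine ⟨{n | 1 ≤ n ∧ b (n - 1)}, fun n hn => hn.1, ?_⟩
    refine hasSum_subtype_iff_indicator.2 ?_
    rw [hshift _ _ (by simp)]
    have hb : HasSum (fun k => if b k then tail x 0 k else 0) (subsum (tail x 0) b) :=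
      (summable_digits (tail_pos hpos 0) (summable_tail hsum 0) b).hasSum
    convert hb using 2 with k
    simp [tail, indicator_apply, add_comm]

end KakeyaCantor

open KakeyaCantor in
/-- (Kakeya) For a convergent series of positive terms, if the set of Kakeya conditions
has finite complement, then the achievement set is a Cantor set. -/
theorem cantorSet_of_kakeyaSet_cofinite (x : ℕ → ℝ)
    (hpos : ∀ n, 1 ≤ n → 0 < x n) (hsum : Summable x)
    (h : ({n : ℕ | 1 ≤ n} \ kakeyaSet x).Finite) :
    IsCantorSet (achievementSet x) := by
  obtain ⟨N, hN⟩ := h.bddAbove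
  have hK : ∀ i, N < i → remainder x i < x i := by
    intro i hi
    by_contra hlt
    exact absurd (hN ⟨(show 1 ≤ i by omega), fun hk => hlt hk.2⟩) (by omega)
  have hint : interior (range (subsum (tail x 0))) = ∅ :=
    Nat.decreasingInduction
      (motive := fun n _ => interior (range (subsum (tail x n))) = ∅)
      (fun n _ ih => interior_eq_empty_step hpos hsum n ih)
      (interior_eq_empty_of_kakeya hpos hsum N hK) (Nat.zero_le N)
  have h0 := tail_pos hpos 0
  have hy := summable_tail hsum 0
  have hthin : IsThin (achievementSet x) := by
    rw [achievementSet_eq hpos hsum]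
    refine ⟨isCompact_range (continuous_subsum h0 hy), range_nonempty _,
      preperfect_range_subsum h0 hy, fun a b hab => ?_⟩
    by_contra! hall
    have hsub : Ioo a b ⊆ interior (range (subsum (tail x 0))) :=
      interior_maximal (fun c hc => hall c hc.1 hc.2) isOpen_Ioo
    rw [hint] at hsub
    exact (nonempty_Ioo.2 hab).ne_empty (subset_empty_iff.1 hsub)
  obtain ⟨e⟩ := nonempty_homeomorph_of_isThin hthin
  exact ⟨e.symm.trans cantorSetHomeomorphNatToBool.symm⟩
end

section
/- Let a : ℕ → ℝ be a sequence of positive terms with ∑ₙ a(n) < ∞. If the achievement set E(a) is a Cantorval, then both K(a) = { n : a(n) > r(n) } and its complement ℕ \ K(a) are infinite. -/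
/-!
Write `T n` for the set of subsums of the tail `∑_{i > n} a i`. Then `T 0` is the achievement set,
each `T n` is a compact subset of `[0, r n]`, and `T n = T (n+1) ∪ (a (n+1) + T (n+1))`. Both halves
of the theorem propagate a property of a late tail back to `T 0` along this recursion.

* If `K(a)` is finite, then `a n ≤ r n` for all `n > N`, and greedy expansion shows that `T N` is
  the whole interval `[0, r N]` (`tailSums_eq_Icc`; no monotonicity of `a` is needed). Hence `T 0` is
  a finite union of compact intervals, so near each side of each point it is locally full or locally
  empty (`LocallyTame`). Such a set is not a Cantorval (`LocallyTame.not_isCantorval`): to the right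
  of the supremum of a gap there is either an interval of the set, so no other gap accumulates
  there, or an interval of the complement, so no component accumulates there.
* If `a n > r n` for all `n > N`, the two pieces of `T n` are separated for `n ≥ N`. An interval inside
  `T N` therefore lies in one piece, and is a translate of an interval inside `T (N+1)`, and so
  on; its length is at most every `r (N+k)`, hence zero. So `T N` has empty interior
  (`interior_tailSums_of_kakeya`), and so does `T 0`, being a finite union of closed sets with empty
  interior. This excludes nondegenerate components.
-/

open Set Filter Topology MeasureTheory
open scoped Pointwise

/-- The set of subsums of the tail `∑_{i > n} a i`, with subsets of `ℕ` encoded as Boolean sequences so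
that it is the image of the compact space `ℕ → Bool`. -/
def tailSums (a : ℕ → ℝ) (n : ℕ) : Set ℝ :=
  range fun b : ℕ → Bool => ∑' i, if b i = true ∧ n < i then a i else 0

/-- On each side of each point of the line, `S` is locally full or locally empty. -/
def LocallyTame (S : Set ℝ) : Prop :=
  ∀ p, ((∀ᶠ x in 𝓝[>] p, x ∈ S) ∨ ∀ᶠ x in 𝓝[>] p, x ∉ S) ∧
    ((∀ᶠ x in 𝓝[<] p, x ∈ S) ∨ ∀ᶠ x in 𝓝[<] p, x ∉ S)

/-! ### Subsums of tails -/

lemma summable_tail_ite {a : ℕ → ℝ} (hsum : Summable a) (n : ℕ) (b : ℕ → Bool) :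
    Summable fun i => if b i = true ∧ n < i then a i else 0 := by
  refine Summable.of_norm_bounded hsum.norm fun i => ?_
  split_ifs <;> simp

lemma achievementSet_eq_tailSums {a : ℕ → ℝ} (hsum : Summable a) :
    achievementSet a = tailSums a 0 := by
  classical
  ext y
  constructor
  · rintro ⟨A, hA, hy⟩
    have hy' : HasSum (A.indicator a) y := hasSum_subtype_iff_indicator.1 hy
    refine ⟨fun i => decide (i ∈ A), ?_⟩
    rw [← hy'.tsum_eq]
    refine tsum_congr fun i => ?_
    by_cases hi : i ∈ A
    · have : 1 ≤ i := hA hi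
      simp [hi]
      omega
    · simp [hi]
  · rintro ⟨b, rfl⟩
    refine ⟨{i | b i = true ∧ 0 < i}, fun i hi => hi.2, ?_⟩
    refine (hasSum_subtype_iff_indicator (f := a)).2 ?_
    convert (summable_tail_ite hsum 0 b).hasSum using 1
    ext i
    simp [indicator_apply]

lemma isCompact_tailSums {a : ℕ → ℝ} (hsum : Summable a) (n : ℕ) :
    IsCompact (tailSums a n) := by
  refine isCompact_range (continuous_tsum (u := fun i => ‖a i‖) (fun i => ?_) hsum.norm ?_)
  · exact (continuous_of_discreteTopology
      (f := fun c : Bool => if c = true ∧ n < i then a i else 0)).comp (continuous_apply i)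
  · intro i b
    split_ifs <;> simp

lemma tsum_tail_succ {a : ℕ → ℝ} (hsum : Summable a) (n : ℕ) (b : ℕ → Bool) :
    (∑' i, if b i = true ∧ n < i then a i else 0) =
      (if b (n + 1) = true then a (n + 1) else 0) +
        ∑' i, if b i = true ∧ n + 1 < i then a i else 0 := by
  have h1 := tsum_ite_eq (n + 1) (fun _ : ℕ => if b (n + 1) = true then a (n + 1) else 0)
  rw [← h1, ← Summable.tsum_add (hasSum_ite_eq _ _).summable (summable_tail_ite hsum _ _)]
  refine tsum_congr fun i => ?_
  by_cases hi : i = n + 1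
  · subst hi; simp
  · have : n < i ↔ n + 1 < i := by omega
    simp [hi, this]

lemma mem_tailSums_succ {a : ℕ → ℝ} (hsum : Summable a) (n : ℕ) (y : ℝ) :
    y ∈ tailSums a n ↔ y ∈ tailSums a (n + 1) ∨ y - a (n + 1) ∈ tailSums a (n + 1) := by
  constructor
  · rintro ⟨b, rfl⟩
    simp only [tsum_tail_succ hsum n b]
    by_cases hb : b (n + 1) = true
    · right; exact ⟨b, by simp [hb]⟩
    · left; exact ⟨b, by simp [hb]⟩
  · have key : ∀ (b : ℕ → Bool) (c : Bool),
        (∑' i, if (Function.update b (n + 1) c) i = true ∧ n + 1 < i then a i else 0) =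
          ∑' i, if b i = true ∧ n + 1 < i then a i else 0 := by
      intro b c
      refine tsum_congr fun i => ?_
      by_cases hi : i = n + 1
      · subst hi; simp
      · simp [hi]
    rintro (⟨b, hb⟩ | ⟨b, hb⟩)
    · refine ⟨Function.update b (n + 1) false, ?_⟩
      simp only [tsum_tail_succ hsum n, key]
      simpa using hb
    · refine ⟨Function.update b (n + 1) true, ?_⟩
      simp only [tsum_tail_succ hsum n, key]
      simp only at hb
      rw [hb]; simp

lemma remainder_eq (a : ℕ → ℝ) (n : ℕ) :
    remainder a n = ∑' i, if (fun _ => true : ℕ → Bool) i = true ∧ n < i then a i else 0 := by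
  refine (tsum_subtype {i | n < i} a).trans (tsum_congr fun i => ?_)
  simp [indicator_apply]

lemma remainder_succ {a : ℕ → ℝ} (hsum : Summable a) (n : ℕ) :
    remainder a n = a (n + 1) + remainder a (n + 1) := by
  rw [remainder_eq, remainder_eq, tsum_tail_succ hsum]; simp

lemma tendsto_remainder {a : ℕ → ℝ} (hsum : Summable a) :
    Tendsto (remainder a) atTop (𝓝 0) := by
  have h : ∀ n, remainder a n = (remainder a 0 + a 0) - ∑ i ∈ Finset.range (n + 1), a i := by
    intro n
    induction n with
    | zero => simp
    | succ k ih => rw [Finset.sum_range_succ]; linarith [remainder_succ hsum k]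
  have h0 : remainder a 0 + a 0 = ∑' i, a i := by
    rw [remainder_eq, hsum.tsum_eq_add_tsum_ite 0, add_comm]
    congr 1
    refine tsum_congr fun i => ?_
    rcases Nat.eq_zero_or_pos i with hi | hi
    · simp [hi]
    · simp [hi, hi.ne']
  have := ((hsum.hasSum.tendsto_sum_nat).comp (tendsto_add_atTop_nat 1)).const_sub (∑' i, a i)
  rw [sub_self] at this
  refine this.congr fun n => ?_
  rw [h n, h0]; rfl

lemma tailSums_subset_Icc {a : ℕ → ℝ} (hpos : ∀ n, 1 ≤ n → 0 < a n) (hsum : Summable a) (n : ℕ) :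
    tailSums a n ⊆ Icc 0 (remainder a n) := by
  rintro _ ⟨b, rfl⟩
  constructor
  · refine tsum_nonneg fun i => ?_
    split_ifs with h
    · exact (hpos i (by omega)).le
    · rfl
  · rw [remainder_eq]
    refine (summable_tail_ite hsum n b).tsum_le_tsum (fun i => ?_) (summable_tail_ite hsum n _)
    by_cases h : n < i
    · have := (hpos i (by omega)).le
      by_cases hb : b i = true <;> simp [h, hb, this]
    · simp [h]

lemma zero_mem_tailSums (a : ℕ → ℝ) (n : ℕ) : (0 : ℝ) ∈ tailSums a n :=
  ⟨fun _ => false, by simp⟩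

/-! ### Finitely many Kakeya conditions -/

/-- `k` steps of greedy expansion approximate `y` up to `r (n + k)`. -/
lemma exists_tailSums_approx {a : ℕ → ℝ} (hsum : Summable a) {N : ℕ}
    (hN : ∀ n, N < n → a n ≤ remainder a n) (k : ℕ) :
    ∀ n, N ≤ n → ∀ y ∈ Icc 0 (remainder a n),
      ∃ t ∈ tailSums a n, |y - t| ≤ remainder a (n + k) := by
  induction k with
  | zero =>
    intro n _ y hy
    exact ⟨0, zero_mem_tailSums a n, by simpa [abs_of_nonneg hy.1] using hy.2⟩
  | succ k ih =>
    intro n hn y hy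
    have hr := remainder_succ hsum n
    have hadd : n + 1 + k = n + (k + 1) := by omega
    rcases le_or_gt (a (n + 1)) y with h | h
    · obtain ⟨t, ht, hyt⟩ := ih (n + 1) (by omega) (y - a (n + 1))
        ⟨by linarith, by linarith [hy.2]⟩
      refine ⟨t + a (n + 1), (mem_tailSums_succ hsum n _).2 (Or.inr (by simpa using ht)), ?_⟩
      rw [← hadd, show y - (t + a (n + 1)) = y - a (n + 1) - t by ring]
      exact hyt
    · obtain ⟨t, ht, hyt⟩ := ih (n + 1) (by omega) y
        ⟨hy.1, by linarith [hN (n + 1) (by omega)]⟩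
      exact ⟨t, (mem_tailSums_succ hsum n _).2 (Or.inl ht), by rwa [← hadd]⟩

lemma tailSums_eq_Icc {a : ℕ → ℝ} (hpos : ∀ n, 1 ≤ n → 0 < a n) (hsum : Summable a) {N : ℕ}
    (hN : ∀ n, N < n → a n ≤ remainder a n) :
    tailSums a N = Icc 0 (remainder a N) := by
  refine (tailSums_subset_Icc hpos hsum N).antisymm fun y hy => ?_
  rw [← (isCompact_tailSums hsum N).isClosed.closure_eq, Metric.mem_closure_iff]
  intro ε hε
  obtain ⟨M, hM⟩ := eventually_atTop.1 ((tendsto_remainder hsum).eventually (gt_mem_nhds hε))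
  obtain ⟨t, ht, hyt⟩ := exists_tailSums_approx hsum hN M N le_rfl y hy
  exact ⟨t, ht, by rw [Real.dist_eq]; exact hyt.trans_lt (hM _ (by omega))⟩

lemma LocallyTame.union {S T : Set ℝ} (hS : LocallyTame S) (hT : LocallyTame T) :
    LocallyTame (S ∪ T) := by
  have key : ∀ l : Filter ℝ, ((∀ᶠ x in l, x ∈ S) ∨ ∀ᶠ x in l, x ∉ S) →
      ((∀ᶠ x in l, x ∈ T) ∨ ∀ᶠ x in l, x ∉ T) →
      ((∀ᶠ x in l, x ∈ S ∪ T) ∨ ∀ᶠ x in l, x ∉ S ∪ T) := by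
    rintro l (h | h) h'
    · exact Or.inl (h.mono fun x hx => Or.inl hx)
    · rcases h' with h' | h'
      · exact Or.inl (h'.mono fun x hx => Or.inr hx)
      · right
        filter_upwards [h, h'] with x h1 h2 h3
        exact h3.elim h1 h2
  exact fun p => ⟨key _ (hS p).1 (hT p).1, key _ (hS p).2 (hT p).2⟩

lemma LocallyTame.translate {S : Set ℝ} (hS : LocallyTame S) (c : ℝ) :
    LocallyTame {x | x - c ∈ S} := by
  intro p
  have ht : Tendsto (fun x => x - c) (𝓝 p) (𝓝 (p - c)) :=
    (continuous_id.sub continuous_const).tendsto p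
  have h1 : Tendsto (fun x => x - c) (𝓝[>] p) (𝓝[>] (p - c)) :=
    ht.inf (tendsto_principal_principal.2 fun x hx => by simpa using hx)
  have h2 : Tendsto (fun x => x - c) (𝓝[<] p) (𝓝[<] (p - c)) :=
    ht.inf (tendsto_principal_principal.2 fun x hx => by simpa using hx)
  exact ⟨(hS (p - c)).1.imp (fun h => h1.eventually h) (fun h => h1.eventually h),
    (hS (p - c)).2.imp (fun h => h2.eventually h) (fun h => h2.eventually h)⟩

lemma locallyTame_Icc (u v : ℝ) : LocallyTame (Icc u v) := by
  intro p
  constructor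
  · rcases lt_or_ge p u with h | h
    · right
      filter_upwards [Ioo_mem_nhdsGT h] with x hx h'
      exact absurd h'.1 (not_le.2 hx.2)
    · rcases lt_or_ge p v with h2 | h2
      · left
        filter_upwards [Ioo_mem_nhdsGT h2] with x hx
        exact ⟨h.trans hx.1.le, hx.2.le⟩
      · right
        filter_upwards [self_mem_nhdsWithin] with x hx h'
        exact absurd (h'.2.trans h2) (not_le.2 hx)
  · rcases lt_or_ge v p with h | h
    · right
      filter_upwards [Ioo_mem_nhdsLT h] with x hx h'
      exact absurd h'.2 (not_le.2 hx.1)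
    · rcases lt_or_ge u p with h2 | h2
      · left
        filter_upwards [Ioo_mem_nhdsLT h2] with x hx
        exact ⟨hx.1.le, hx.2.le.trans h⟩
      · right
        filter_upwards [self_mem_nhdsWithin] with x hx h'
        exact absurd (h2.trans h'.1) (not_le.2 hx)

lemma LocallyTame.not_isCantorval {S : Set ℝ} (hS : LocallyTame S) : ¬ IsCantorval S := by
  rintro ⟨-, hc, ⟨G, hG⟩, -, hacc⟩
  obtain ⟨hgap, hint⟩ := hacc G hG (sSup G) (by simp)
  obtain ⟨⟨x, hx, hGx⟩, hbd⟩ := hG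
  have hopen : IsOpen G := hGx ▸ hc.isClosed.isOpen_compl.connectedComponentIn
  have hxG : x ∈ G := hGx ▸ mem_connectedComponentIn hx
  have hsub : G ⊆ Sᶜ := hGx ▸ connectedComponentIn_subset _ _
  -- maximality of the component `G`
  have hmax : ∀ C ⊆ Sᶜ, IsPreconnected C → ∀ y ∈ C, y ∈ G → C ⊆ G := by
    intro C hC hCc y hyC hyG
    rw [hGx, connectedComponentIn_eq (hGx ▸ hyG)]
    exact hCc.subset_connectedComponentIn hyC hC
  set p := sSup G with hp
  have hle : ∀ y ∈ G, y ≤ p := fun y hy => le_csSup hbd.bddAbove hy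
  have hpG : p ∉ G := by
    intro h
    obtain ⟨ε, hε, hb⟩ := Metric.isOpen_iff.1 hopen p h
    have := hle (p + ε / 2) (hb (by
      rw [Metric.mem_ball, Real.dist_eq, add_sub_cancel_left, abs_of_pos] <;> linarith))
    linarith
  have hord : OrdConnected G := by
    rw [hGx]; exact isPreconnected_connectedComponentIn.ordConnected
  have hIco : ∀ y ∈ G, Ico y p ⊆ G := by
    intro y hy z hz
    obtain ⟨w, hw, hzw⟩ := exists_lt_of_lt_csSup ⟨x, hxG⟩ hz.2
    exact hord.out hy hw ⟨hz.1, hzw.le⟩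
  have hxp : x < p := (hle x hxG).lt_of_ne (fun h => hpG (h ▸ hxG))
  have hpS : p ∈ S := by
    by_contra hpS
    refine hpG (hmax (Icc x p) ?_ isPreconnected_Icc x ⟨le_rfl, hxp.le⟩ hxG ⟨hxp.le, le_rfl⟩)
    intro z hz
    rcases hz.2.eq_or_lt with h | h
    · rwa [h]
    · exact hsub (hIco x hxG ⟨hz.1, h⟩)
  rcases (hS p).1 with h | h
  · obtain ⟨q, hq, hqS⟩ := mem_nhdsGT_iff_exists_Ioo_subset.1 h
    have hq' : p < q := hq
    obtain ⟨G', ⟨⟨x', hx', hG'⟩, -⟩, hne, z, hzG', hz⟩ :=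
      hgap (min (q - p) (p - x)) (lt_min (by linarith) (by linarith))
    rw [Metric.mem_ball, Real.dist_eq, lt_min_iff, abs_lt, abs_lt] at hz
    have hzS : z ∉ S := (hG' ▸ connectedComponentIn_subset _ _ : G' ⊆ Sᶜ) hzG'
    rcases lt_trichotomy z p with hzp | hzp | hzp
    · have hzG : z ∈ G := hIco x hxG ⟨by linarith [hz.2.1], hzp⟩
      refine hne ?_
      have e1 : connectedComponentIn Sᶜ x = connectedComponentIn Sᶜ z :=
        connectedComponentIn_eq (hGx ▸ hzG)
      have e2 : connectedComponentIn Sᶜ x' = connectedComponentIn Sᶜ z :=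
        connectedComponentIn_eq (hG' ▸ hzG')
      rw [hGx, hG', e1, e2]
    · exact hzS (hzp ▸ hpS)
    · exact hzS (hqS ⟨hzp, by linarith [hz.1.2]⟩)
  · obtain ⟨q, hq, hqS⟩ := mem_nhdsGT_iff_exists_Ioo_subset.1 h
    have hq' : p < q := hq
    obtain ⟨I, ⟨⟨x', hx', hI⟩, -⟩, z, hzI, hz, hzne⟩ :=
      hint (min (q - p) (p - x)) (lt_min (by linarith) (by linarith))
    rw [Metric.mem_ball, Real.dist_eq, lt_min_iff, abs_lt, abs_lt] at hz
    have hzS : z ∈ S := (hI ▸ connectedComponentIn_subset _ _ : I ⊆ S) hzI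
    rcases lt_trichotomy z p with hzp | hzp | hzp
    · exact hsub (hIco x hxG ⟨by linarith [hz.2.1], hzp⟩) hzS
    · exact hzne hzp
    · exact hqS ⟨hzp, by linarith [hz.1.2]⟩ hzS

/-! ### Cofinitely many Kakeya conditions -/

lemma interior_tailSums_of_kakeya {a : ℕ → ℝ} (hpos : ∀ n, 1 ≤ n → 0 < a n) (hsum : Summable a)
    {N : ℕ} (hN : ∀ n, N < n → remainder a n < a n) :
    interior (tailSums a N) = ∅ := by
  have key : ∀ k n, N ≤ n → ∀ u v, u ≤ v → Icc u v ⊆ tailSums a n →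
      v - u ≤ remainder a (n + k) := by
    intro k
    induction k with
    | zero =>
      intro n _ u v huv h
      have hu := tailSums_subset_Icc hpos hsum n (h ⟨le_rfl, huv⟩)
      have hv := tailSums_subset_Icc hpos hsum n (h ⟨huv, le_rfl⟩)
      simp only [add_zero]
      linarith [hu.1, hv.2]
    | succ k ih =>
      intro n hn u v huv h
      have hgap := hN (n + 1) (by omega)
      have hadd : n + 1 + k = n + (k + 1) := by omega
      -- no point of `[u, v]` lies strictly between the two pieces of `tailSums a n`
      have hno : ∀ y ∈ Icc u v, y ≤ remainder a (n + 1) ∨ a (n + 1) ≤ y := by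
        intro y hy
        rcases (mem_tailSums_succ hsum n y).1 (h hy) with h' | h'
        · exact Or.inl (tailSums_subset_Icc hpos hsum _ h').2
        · exact Or.inr (by linarith [(tailSums_subset_Icc hpos hsum _ h').1])
      rw [← hadd]
      rcases lt_or_ge v (a (n + 1)) with hv | hv
      · refine ih (n + 1) (by omega) u v huv fun y hy => ?_
        rcases (mem_tailSums_succ hsum n y).1 (h hy) with h' | h'
        · exact h'
        · linarith [(tailSums_subset_Icc hpos hsum _ h').1, hy.2]
      · have hu : remainder a (n + 1) < u := by
          by_contra! hu
          have := hno ((remainder a (n + 1) + a (n + 1)) / 2)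
            ⟨by linarith, by linarith⟩
          rcases this with h' | h' <;> linarith
        have := ih (n + 1) (by omega) (u - a (n + 1)) (v - a (n + 1)) (by linarith) fun y hy => ?_
        · linarith
        · rcases (mem_tailSums_succ hsum n (y + a (n + 1))).1
            (h ⟨by linarith [hy.1], by linarith [hy.2]⟩) with h' | h'
          · linarith [(tailSums_subset_Icc hpos hsum _ h').2, hy.1]
          · simpa using h'
  rw [eq_empty_iff_forall_notMem]
  intro y hy
  obtain ⟨ε, hε, hb⟩ := Metric.isOpen_iff.1 isOpen_interior y hy
  obtain ⟨M, hM⟩ := eventually_atTop.1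
    ((tendsto_remainder hsum).eventually (gt_mem_nhds (half_pos hε)))
  have h1 := key M N le_rfl y (y + ε / 2) (by linarith) fun z hz => interior_subset (hb (by
    rw [Metric.mem_ball, Real.dist_eq, abs_lt]
    constructor <;> linarith [hz.1, hz.2]))
  have h2 := hM (N + M) (by omega)
  linarith

lemma interior_tailSums_zero {a : ℕ → ℝ} (hsum : Summable a) (N : ℕ)
    (hN : interior (tailSums a N) = ∅) : interior (tailSums a 0) = ∅ := by
  induction N with
  | zero => exact hN
  | succ n ih =>
    refine ih ?_
    have heq : tailSums a n =
        tailSums a (n + 1) ∪ Homeomorph.subRight (a (n + 1)) ⁻¹' tailSums a (n + 1) := by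
      ext y; exact mem_tailSums_succ hsum n y
    rw [heq, interior_union_isClosed_of_interior_empty (isCompact_tailSums hsum _).isClosed, hN]
    rw [← Homeomorph.preimage_interior, hN, preimage_empty]

/-- If the achievement set of a convergent series of positive terms is a Cantorval,
then the set of Kakeya conditions and its complement are both infinite. -/
theorem kakeyaSet_infinite_of_cantorval (a : ℕ → ℝ)
    (hpos : ∀ n, 1 ≤ n → 0 < a n) (hsum : Summable a)
    (h : IsCantorval (achievementSet a)) :
    (kakeyaSet a).Infinite ∧ ({n : ℕ | 1 ≤ n} \ kakeyaSet a).Infinite := by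
  rw [achievementSet_eq_tailSums hsum] at h
  constructor
  · intro hfin
    obtain ⟨N, hN⟩ := hfin.bddAbove
    have hN' : ∀ n, N < n → a n ≤ remainder a n := by
      intro n hn
      by_contra! hlt
      exact absurd (hN (show n ∈ kakeyaSet a from ⟨by omega, hlt⟩)) (by omega)
    have htame : ∀ M, LocallyTame (tailSums a M) → LocallyTame (tailSums a 0) := by
      intro M
      induction M with
      | zero => exact id
      | succ n ih =>
        intro hM
        refine ih ?_
        have heq : tailSums a n =
            tailSums a (n + 1) ∪ {y | y - a (n + 1) ∈ tailSums a (n + 1)} := by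
          ext y; exact mem_tailSums_succ hsum n y
        rw [heq]
        exact hM.union (hM.translate _)
    refine (htame N ?_).not_isCantorval h
    rw [tailSums_eq_Icc hpos hsum hN']
    exact locallyTame_Icc _ _
  · intro hfin
    obtain ⟨N, hN⟩ := hfin.bddAbove
    have hN' : ∀ n, N < n → remainder a n < a n := by
      intro n hn
      by_contra! hle
      have hmem : n ∈ {n : ℕ | 1 ≤ n} \ kakeyaSet a :=
        ⟨show 1 ≤ n by omega, fun hk => absurd hk.2 (not_lt.2 hle)⟩
      exact absurd (hN hmem) (by omega)
    have hemp := interior_tailSums_zero hsum N (interior_tailSums_of_kakeya hpos hsum hN')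
    obtain ⟨-, -, -, ⟨I, ⟨x, -, hI⟩, hnon⟩, -⟩ := h
    obtain ⟨u, hu, v, hv, huv⟩ := (not_subsingleton_iff.1 hnon).exists_lt
    have hord : OrdConnected I := by
      rw [hI]; exact isPreconnected_connectedComponentIn.ordConnected
    have hIS : I ⊆ tailSums a 0 := hI ▸ connectedComponentIn_subset _ _
    have hsub : Ioo u v ⊆ interior (tailSums a 0) :=
      interior_maximal ((Ioo_subset_Icc_self.trans (hord.out hu hv)).trans hIS) isOpen_Ioo
    rw [hemp] at hsub
    exact hsub (show (u + v) / 2 ∈ Ioo u v from ⟨by linarith, by linarith⟩)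
end
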